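/- arXiv:2306.14522 — 10 statements merged into one kernel-verified Lean document; each statement's English description precedes it below -/
import Mathlib

section
/- Let S ⊆ ℝ^d be a nonempty open convex set, let φ, f : ℝ^d → ℝ be differentiable on S with φ convex on S, and let L > 0. Then the functions Lφ + f and Lφ − f are both convex on S if and only if for all x, y ∈ S one has |f(x) − f(y) − ⟨∇f(y), x − y⟩| ≤ L·D_φ(x, y). -/
open scoped RealInnerProductSpace

section GradientInequality

variable {E : Type*} [NormedAddCommGroup E] [InnerProductSpace ℝ E]
  {S : Set E} {g : E → ℝ}

/-- A convex function lies above its tangent hyperplanes. -/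
theorem ConvexOn.inner_gradient_le_sub [CompleteSpace E] {v x y : E} (hg : ConvexOn ℝ S g)
    (hx : x ∈ S) (hy : y ∈ S) (hv : HasGradientAt g v y) :
    ⟪v, x - y⟫ ≤ g x - g y := by
  have hline : HasDerivAt (fun t : ℝ => g (AffineMap.lineMap y x t)) ⟪v, x - y⟫ 0 := by
    have hv' : HasFDerivAt g (InnerProductSpace.toDual ℝ E v)
        (AffineMap.lineMap y x (0 : ℝ)) := by
      simpa using hv.hasFDerivAt
    exact hv'.comp_hasDerivAt (0 : ℝ) AffineMap.hasDerivAt_lineMap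
  have hslope := (hg.comp_affineMap (AffineMap.lineMap y x)).le_slope_of_hasDerivAt
    (x := (0 : ℝ)) (y := 1) (by simpa using hy) (by simpa using hx) zero_lt_one hline
  simpa [slope_def_field] using hslope

/-- A function on a convex set that admits a supporting affine function at every point is convex. -/
theorem convexOn_of_forall_inner_le_sub {g' : E → E} (hS : Convex ℝ S)
    (h : ∀ x ∈ S, ∀ y ∈ S, ⟪g' y, x - y⟫ ≤ g x - g y) : ConvexOn ℝ S g := by
  refine ⟨hS, fun x hx y hy a b ha hb hab => ?_⟩
  set z := a • x + b • y with hz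
  have hzS : z ∈ S := hS hx hy ha hb hab
  have hzero : a * ⟪g' z, x - z⟫ + b * ⟪g' z, y - z⟫ = 0 := by
    have hcomb : a • (x - z) + b • (y - z) = 0 := by
      rw [smul_sub, smul_sub, sub_add_sub_comm, ← add_smul, hab, one_smul, ← hz, sub_self]
    rw [← real_inner_smul_right, ← real_inner_smul_right, ← inner_add_right, hcomb,
      inner_zero_right]
  have hxz := mul_le_mul_of_nonneg_left (h x hx z hzS) ha
  have hyz := mul_le_mul_of_nonneg_left (h y hy z hzS) hb
  have hgz : a * g z + b * g z = g z := by rw [← add_mul, hab, one_mul]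
  simp only [smul_eq_mul]
  linarith

/-- First-order characterization of convexity. -/
theorem convexOn_iff_forall_inner_gradient_le_sub [CompleteSpace E] {g' : E → E}
    (hS : Convex ℝ S)
    (hg : ∀ y ∈ S, HasGradientAt g (g' y) y) :
    ConvexOn ℝ S g ↔ ∀ x ∈ S, ∀ y ∈ S, ⟪g' y, x - y⟫ ≤ g x - g y :=
  ⟨fun h _ hx y hy => h.inner_gradient_le_sub hx hy (hg y hy),
    convexOn_of_forall_inner_le_sub hS⟩

end GradientInequality

/-- smooth adaptability (convexity of `L·φ + f` and `L·φ − f` on `S`)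
is equivalent to the two-sided descent inequality with the Bregman distance `D_φ`. -/
theorem smooth_adaptable_iff_two_sided_descent {d : ℕ}
    (S : Set (EuclideanSpace ℝ (Fin d))) (hSne : S.Nonempty) (hSopen : IsOpen S)
    (hSconv : Convex ℝ S)
    (φ f : EuclideanSpace ℝ (Fin d) → ℝ)
    (φ' f' : EuclideanSpace ℝ (Fin d) → EuclideanSpace ℝ (Fin d))
    (hφdiff : ∀ x ∈ S, HasGradientAt φ (φ' x) x)
    (hfdiff : ∀ x ∈ S, HasGradientAt f (f' x) x)
    (hφconv : ConvexOn ℝ S φ)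
    (L : ℝ) (hL : 0 < L) :
    (ConvexOn ℝ S (fun x => L * φ x + f x) ∧ ConvexOn ℝ S (fun x => L * φ x - f x)) ↔
      (∀ x ∈ S, ∀ y ∈ S,
        abs (f x - f y - ⟪f' y, x - y⟫) ≤ L * (φ x - φ y - ⟪φ' y, x - y⟫)) := by
  have hadd : ∀ x ∈ S, HasGradientAt (fun x => L * φ x + f x) (L • φ' x + f' x) x :=
    fun x hx => by
      rw [hasGradientAt_iff_hasFDerivAt]
      rw [map_add, map_smul]
      exact ((hφdiff x hx).hasFDerivAt.const_mul L).add (hfdiff x hx).hasFDerivAt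
  have hsub : ∀ x ∈ S, HasGradientAt (fun x => L * φ x - f x) (L • φ' x - f' x) x :=
    fun x hx => by
      rw [hasGradientAt_iff_hasFDerivAt]
      rw [map_sub, map_smul]
      exact ((hφdiff x hx).hasFDerivAt.const_mul L).sub (hfdiff x hx).hasFDerivAt
  rw [convexOn_iff_forall_inner_gradient_le_sub hSconv hadd,
    convexOn_iff_forall_inner_gradient_le_sub hSconv hsub]
  simp only [inner_add_left, inner_sub_left, real_inner_smul_left, abs_le]
  constructor
  · rintro ⟨h₁, h₂⟩ x hx y hy
    have := h₁ x hx y hy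
    have := h₂ x hx y hy
    constructor <;> linarith
  · intro h
    constructor <;> intro x hx y hy <;> obtain ⟨h₁, h₂⟩ := h x hx y hy <;> linarith
end

section
/- Let S ⊆ ℝ^d be a nonempty open convex set, let φ, f : ℝ^d → ℝ be twice continuously differentiable on S with φ convex on S, and let L > 0. Then |f(x) − f(y) − ⟨∇f(y), x − y⟩| ≤ L·D_φ(x, y) holds for all x, y ∈ S if and only if for every x ∈ S both matrices L∇²φ(x) + ∇²f(x) and L∇²φ(x) − ∇²f(x) are positive semidefinite. -/
open scoped RealInnerProductSpace

section BregmanHessian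

variable {E : Type*} [NormedAddCommGroup E] [InnerProductSpace ℝ E]

/-- The directional derivative of a vector field along a line, tested against the direction. -/
theorem hasDerivAt_inner_comp_line {G : E → E} {G' : E →L[ℝ] E} {x h : E} {t : ℝ}
    (hG : HasFDerivAt G G' (x + t • h)) :
    HasDerivAt (fun s : ℝ => ⟪G (x + s • h), h⟫) ⟪G' h, h⟫ t := by
  have hline : HasDerivAt (fun s : ℝ => x + s • h) h t := by
    simpa using ((hasDerivAt_id t).smul_const h).const_add x
  simpa using (hG.comp_hasDerivAt t hline).inner ℝ (hasDerivAt_const t h)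

variable [CompleteSpace E]

/-- The derivative of a function along a line, in terms of its gradient. -/
theorem HasGradientAt.hasDerivAt_comp_line {g : E → ℝ} {g' x h : E} {t : ℝ}
    (hg : HasGradientAt g g' (x + t • h)) :
    HasDerivAt (fun s : ℝ => g (x + s • h)) ⟪g', h⟫ t := by
  have hline : HasDerivAt (fun s : ℝ => x + s • h) h t := by
    simpa using ((hasDerivAt_id t).smul_const h).const_add x
  exact hg.hasFDerivAt.comp_hasDerivAt t hline

/-- On an open convex set, all Bregman distances of a twice differentiable function are
nonnegative iff its Hessian is positive semidefinite. -/
theorem bregman_nonneg_iff_hessian_nonneg {S : Set E} (hSopen : IsOpen S) (hSconv : Convex ℝ S)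
    {g : E → ℝ} {g' : E → E} {g'' : E → E →L[ℝ] E}
    (hg : ∀ x ∈ S, HasGradientAt g (g' x) x) (hg' : ∀ x ∈ S, HasFDerivAt g' (g'' x) x) :
    (∀ x ∈ S, ∀ y ∈ S, 0 ≤ g x - g y - ⟪g' y, x - y⟫) ↔
      ∀ x ∈ S, ∀ h, 0 ≤ ⟪g'' x h, h⟫ := by
  constructor
  · intro H x hx h
    have hd : HasDerivAt (fun s : ℝ => ⟪g' (x + s • h), h⟫) ⟪g'' x h, h⟫ 0 :=
      hasDerivAt_inner_comp_line (by simpa using hg' x hx)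
    have hcont : Filter.Tendsto (fun s : ℝ => x + s • h) (nhds 0) (nhds x) := by
      have : Continuous fun s : ℝ => x + s • h := by fun_prop
      simpa using this.tendsto 0
    have hmem : ∀ᶠ s : ℝ in nhdsWithin 0 (Set.Ioi 0), x + s • h ∈ S :=
      (hcont.eventually (hSopen.mem_nhds hx)).filter_mono nhdsWithin_le_nhds
    have hslope := (hasDerivAt_iff_tendsto_slope.1 hd).mono_left
      (nhdsWithin_mono 0 fun s (hs : s ∈ Set.Ioi 0) => ne_of_gt hs)
    refine ge_of_tendsto hslope ?_
    filter_upwards [hmem, self_mem_nhdsWithin] with s hs hpos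
    replace hpos : 0 < s := hpos
    have h₁ := H _ hs x hx
    have h₂ := H x hx _ hs
    simp only [add_sub_cancel_left, sub_add_cancel_left, inner_neg_right, inner_smul_right]
      at h₁ h₂
    have hmono : 0 ≤ ⟪g' (x + s • h), h⟫ - ⟪g' x, h⟫ :=
      nonneg_of_mul_nonneg_right (by linarith) hpos
    simpa [slope_def_field] using div_nonneg hmono hpos.le
  · intro H x hx y hy
    have hmem : ∀ t ∈ Set.Icc (0 : ℝ) 1, y + t • (x - y) ∈ S := fun t ht =>
      hSconv.add_smul_sub_mem hy hx ht
    have hd : ∀ t ∈ Set.Icc (0 : ℝ) 1, HasDerivAt (fun s : ℝ => g (y + s • (x - y)))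
        ⟪g' (y + t • (x - y)), x - y⟫ t := fun t ht =>
      (hg _ (hmem t ht)).hasDerivAt_comp_line
    have hd' : ∀ t ∈ Set.Icc (0 : ℝ) 1, HasDerivAt
        (fun s : ℝ => ⟪g' (y + s • (x - y)), x - y⟫)
        ⟪g'' (y + t • (x - y)) (x - y), x - y⟫ t := fun t ht =>
      hasDerivAt_inner_comp_line (hg' _ (hmem t ht))
    have hmono : MonotoneOn (fun s : ℝ => ⟪g' (y + s • (x - y)), x - y⟫) (Set.Icc 0 1) := by
      refine monotoneOn_of_hasDerivWithinAt_nonneg (convex_Icc 0 1)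
        (fun t ht => (hd' t ht).continuousAt.continuousWithinAt)
        (fun t ht => (hd' t (interior_subset ht)).hasDerivWithinAt)
        (fun t ht => H _ (hmem t (interior_subset ht)) _)
    obtain ⟨c, hc, hslope⟩ := exists_hasDerivAt_eq_slope _ _ zero_lt_one
      (fun t ht => (hd t ht).continuousAt.continuousWithinAt)
      (fun t ht => hd t (Set.Ioo_subset_Icc_self ht))
    have hle := hmono (Set.left_mem_Icc.2 zero_le_one) (Set.Ioo_subset_Icc_self hc) hc.1.le
    simp only [zero_smul, add_zero, one_smul, add_sub_cancel, sub_zero, div_one] at hslope hle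
    linarith

end BregmanHessian

/-- for `C²` functions, the two-sided descent inequality with the Bregman
distance `D_φ` holds on `S` iff the Hessian bounds `L∇²φ(x) ± ∇²f(x) ⪰ 0` hold on `S`. -/
theorem two_sided_descent_iff_hessian_psd {d : ℕ}
    (S : Set (EuclideanSpace ℝ (Fin d))) (hSne : S.Nonempty) (hSopen : IsOpen S)
    (hSconv : Convex ℝ S)
    (φ f : EuclideanSpace ℝ (Fin d) → ℝ)
    (φ' f' : EuclideanSpace ℝ (Fin d) → EuclideanSpace ℝ (Fin d))
    (φ'' f'' : EuclideanSpace ℝ (Fin d) →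
      (EuclideanSpace ℝ (Fin d) →L[ℝ] EuclideanSpace ℝ (Fin d)))
    (hφdiff : ∀ x ∈ S, HasGradientAt φ (φ' x) x)
    (hfdiff : ∀ x ∈ S, HasGradientAt f (f' x) x)
    (hφdiff2 : ∀ x ∈ S, HasFDerivAt φ' (φ'' x) x)
    (hfdiff2 : ∀ x ∈ S, HasFDerivAt f' (f'' x) x)
    (hφcont2 : ContinuousOn φ'' S)
    (hfcont2 : ContinuousOn f'' S)
    (hφconv : ConvexOn ℝ S φ)
    (L : ℝ) (hL : 0 < L) :
    (∀ x ∈ S, ∀ y ∈ S,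
        abs (f x - f y - ⟪f' y, x - y⟫) ≤ L * (φ x - φ y - ⟪φ' y, x - y⟫)) ↔
      (∀ x ∈ S, ∀ h : EuclideanSpace ℝ (Fin d),
        0 ≤ L * ⟪φ'' x h, h⟫ + ⟪f'' x h, h⟫ ∧ 0 ≤ L * ⟪φ'' x h, h⟫ - ⟪f'' x h, h⟫) := by
  have key (ε : ℝ) := bregman_nonneg_iff_hessian_nonneg hSopen hSconv
    (g := fun x => L * φ x + ε * f x) (g' := fun x => L • φ' x + ε • f' x)
    (g'' := fun x => L • φ'' x + ε • f'' x)
    (fun x hx => by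
      rw [hasGradientAt_iff_hasFDerivAt]
      simp only [map_add, map_smul]
      exact ((hφdiff x hx).hasFDerivAt.const_mul L).add
        ((hfdiff x hx).hasFDerivAt.const_mul ε))
    (fun x hx => ((hφdiff2 x hx).const_smul L).add ((hfdiff2 x hx).const_smul ε))
  have hplus := key 1
  have hminus := key (-1)
  simp only [add_apply, smul_apply, inner_add_left, real_inner_smul_left] at hplus hminus
  constructor
  · intro H x hx h
    have h₁ := hplus.1 (fun x hx y hy => by linarith [(abs_le.1 (H x hx y hy)).1]) x hx h
    have h₂ := hminus.1 (fun x hx y hy => by linarith [(abs_le.1 (H x hx y hy)).2]) x hx h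
    constructor <;> linarith
  · intro H x hx y hy
    have h₁ := hplus.2 (fun x hx h => by linarith [(H x hx h).1]) x hx y hy
    have h₂ := hminus.2 (fun x hx h => by linarith [(H x hx h).2]) x hx y hy
    rw [abs_le]
    constructor <;> linarith
end

section
/- Let C ⊆ ℝ^d be a nonempty open convex set. Let φ : ℝ^d → ℝ ∪ {+∞} be proper, lower semicontinuous and convex with int(dom φ) = C, differentiable and strictly convex on C, supercoercive (φ(x)/‖x‖ → ∞ as ‖x‖ → ∞), and essentially smooth (‖∇φ(x_k)‖ → ∞ whenever x_k ∈ C converges to a boundary point of dom φ). Let R : ℝ^d → ℝ ∪ {+∞} be proper, lower semicontinuous and convex with dom R ∩ C ≠ ∅. Then for every x ∈ C and every α > 0, the minimization problem min over u ∈ closure(C) of αR(u) + D_φ(u, x) has exactly one solution, and this solution belongs to C. -/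
open scoped RealInnerProductSpace
open Filter

section BregmanProx

variable {E : Type*} [NormedAddCommGroup E] [InnerProductSpace ℝ E]

/-- A convex extended-real-valued function that avoids `⊥` is convex on its effective domain. -/
theorem convexOn_toReal_of_convex {f : E → EReal} (hbot : ∀ z, f z ≠ ⊥)
    (hconv : ∀ u v : E, ∀ t : ℝ, 0 ≤ t → t ≤ 1 →
      f (t • u + (1 - t) • v) ≤ (t : EReal) * f u + ((1 - t : ℝ) : EReal) * f v) :
    ConvexOn ℝ {z | f z ≠ ⊤} (fun z => (f z).toReal) := by
  have key : ∀ u v : E, f u ≠ ⊤ → f v ≠ ⊤ → ∀ t : ℝ, 0 ≤ t → t ≤ 1 →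
      f (t • u + (1 - t) • v) ≤ ((t * (f u).toReal + (1 - t) * (f v).toReal : ℝ) : EReal) := by
    intro u v hu hv t h0 h1
    have h := hconv u v t h0 h1
    rw [← EReal.coe_toReal hu (hbot u), ← EReal.coe_toReal hv (hbot v)] at h
    exact_mod_cast h
  refine ⟨fun u hu v hv a b ha hb hab => ?_, fun u hu v hv a b ha hb hab => ?_⟩
  all_goals
    obtain rfl : b = 1 - a := by linarith
    have h := key u v hu hv a ha (by linarith)
  · exact ne_top_of_le_ne_top (EReal.coe_ne_top _) h
  · exact EReal.toReal_le_toReal h (hbot _) (EReal.coe_ne_top _)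

/-- The gradient inequality for a convex function. -/
theorem ConvexOn.add_inner_le_of_hasGradientAt [CompleteSpace E] {s : Set E} {f : E → ℝ}
    (hf : ConvexOn ℝ s f) {g z v : E} (hg : HasGradientAt f g z) (hz : z ∈ s) (hv : v ∈ s) :
    f z + ⟪g, v - z⟫ ≤ f v := by
  have hd : HasLineDerivAt ℝ f ⟪g, v - z⟫ z (v - z) := by
    simpa using hg.hasFDerivAt.hasLineDerivAt (v - z)
  have hlim := hd.tendsto_slope_zero_right
  have hle : ⟪g, v - z⟫ ≤ f v - f z := by
    refine le_of_tendsto hlim ?_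
    filter_upwards [Ioo_mem_nhdsGT (zero_lt_one : (0 : ℝ) < 1)] with t ht
    have h := hf.2 hz hv (sub_nonneg.2 ht.2.le) ht.1.le (by ring)
    have heq : (1 - t) • z + t • v = z + t • (v - z) := by module
    rw [heq] at h
    simp only [smul_eq_mul] at h ⊢
    rw [inv_mul_le_iff₀ ht.1]
    linarith
  linarith

/-- A minimizer of `f + g`, with `f` essentially smooth and `dom g` meeting the interior of
`dom f`, lies in the interior of `dom f`. -/
theorem mem_interior_of_minimizer_add [CompleteSpace E] {s t : Set E} {f g : E → ℝ} {f' : E → E}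
    (hf : ConvexOn ℝ s f) (hg : ConvexOn ℝ t g)
    (hdiff : ∀ z ∈ interior s, HasGradientAt f (f' z) z)
    (hess : ∀ (xs : ℕ → E) (b : E), (∀ n, xs n ∈ interior s) → b ∈ frontier s →
      Tendsto xs atTop (nhds b) → Tendsto (fun n => ‖f' (xs n)‖) atTop atTop)
    {u z : E} (hus : u ∈ s) (hut : u ∈ t) (hzs : z ∈ interior s) (hzt : z ∈ t)
    (hmin : ∀ v ∈ interior s, v ∈ t → f u + g u ≤ f v + g v) : u ∈ interior s := by
  by_contra hu
  have hzs' : z ∈ s := interior_subset hzs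
  let τ : ℕ → ℝ := fun n => 1 / ((n : ℝ) + 1) / 2
  have hτ0 : ∀ n, 0 < τ n := fun n => by positivity
  have hτ1 : ∀ n, τ n ≤ 1 / 2 := fun n => by
    have : 1 / ((n : ℝ) + 1) ≤ 1 := by
      rw [div_le_one (by positivity)]
      linarith [(n.cast_nonneg : (0 : ℝ) ≤ n)]
    simp only [τ]
    linarith
  have hτlim : Tendsto τ atTop (nhds 0) := by
    simpa [τ] using (tendsto_one_div_add_atTop_nhds_zero_nat (𝕜 := ℝ)).div_const 2
  let y : ℕ → E := fun n => τ n • z + (1 - τ n) • u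
  have hyint : ∀ n, y n ∈ interior s := fun n =>
    hf.1.combo_interior_self_mem_interior hzs hus (hτ0 n) (by linarith [hτ1 n]) (by ring)
  have hys : ∀ n, y n ∈ s := fun n => interior_subset (hyint n)
  have hyt : ∀ n, y n ∈ t := fun n =>
    hg.1 hzt hut (hτ0 n).le (by linarith [hτ1 n]) (by ring)
  have hylim : Tendsto y atTop (nhds u) := by
    have h := (hτlim.smul_const z).add ((hτlim.const_sub 1).smul_const u)
    simpa using h
  have hnorm := hess y u hyint ⟨subset_closure hus, hu⟩ hylim
  have hlower : ∀ n, g u - g z ≤ ⟪f' (y n), z - u⟫ := fun n => by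
    have h1 := hmin (y n) (hyint n) (hyt n)
    have h2 := hg.2 hzt hut (hτ0 n).le (by linarith [hτ1 n]) (by ring : τ n + (1 - τ n) = 1)
    have h3 := hf.add_inner_le_of_hasGradientAt (hdiff _ (hyint n)) (hys n) hus
    have heq : u - y n = -(τ n • (z - u)) := by simp only [y]; module
    rw [heq, inner_neg_right, real_inner_smul_right] at h3
    simp only [smul_eq_mul] at h2
    have h4 : τ n * (g u - g z) ≤ τ n * ⟪f' (y n), z - u⟫ := by
      change g (y n) ≤ _ at h2
      linarith
    exact le_of_mul_le_mul_left h4 (hτ0 n)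
  have hbelow : ∀ n, f z - ‖f' z‖ * ‖u - z‖ ≤ f (y n) := fun n => by
    have h1 := hf.add_inner_le_of_hasGradientAt (hdiff z hzs) hzs' (hys n)
    have heq : y n - z = (1 - τ n) • (u - z) := by simp only [y]; module
    have h2 := neg_le_of_abs_le (abs_real_inner_le_norm (f' z) (y n - z))
    have h3 : ‖y n - z‖ ≤ ‖u - z‖ := by
      rw [heq, norm_smul, Real.norm_of_nonneg (by linarith [hτ1 n])]
      exact mul_le_of_le_one_left (norm_nonneg _) (by linarith [hτ0 n])
    have h4 := mul_le_mul_of_nonneg_left h3 (norm_nonneg (f' z))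
    linarith
  obtain ⟨r, hr, hball⟩ : ∃ r > 0, ∀ v ∈ Metric.closedBall z r, v ∈ s ∧ f v < f z + 1 := by
    have hcont : ContinuousAt f z := (hdiff z hzs).hasFDerivAt.continuousAt
    have hev := (eventually_mem_set.2 (mem_interior_iff_mem_nhds.1 hzs)).and
      (hcont.eventually_lt_const (lt_add_one (f z)))
    obtain ⟨r, hr, hsub⟩ := Metric.nhds_basis_closedBall.mem_iff.1 hev
    exact ⟨r, hr, fun v hv => hsub hv⟩
  have hupper : ∀ n, r * ‖f' (y n)‖ ≤
      (f z + 1) - (f z - ‖f' z‖ * ‖u - z‖) + |g u - g z| := fun n => by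
    set p := f' (y n) with hp
    let e : E := ‖p‖⁻¹ • p
    have he : ‖e‖ ≤ 1 := by
      simp only [e, norm_smul, norm_inv, norm_norm]
      exact inv_mul_le_one
    have hpe : ⟪p, e⟫ = ‖p‖ := by
      rcases eq_or_ne p 0 with h0 | h0
      · simp [h0]
      · have : ‖p‖ ≠ 0 := norm_ne_zero_iff.2 h0
        simp only [e, real_inner_smul_right, real_inner_self_eq_norm_sq]
        field_simp
    obtain ⟨hvs, hvf⟩ := hball (z + r • e) (by
      simp only [Metric.mem_closedBall, dist_self_add_left, norm_smul, Real.norm_of_nonneg hr.le]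
      exact mul_le_of_le_one_right hr.le he)
    have h1 := hf.add_inner_le_of_hasGradientAt (hdiff _ (hyint n)) (hys n) hvs
    have heq : z + r • e - y n = (1 - τ n) • (z - u) + r • e := by simp only [y]; module
    rw [heq, ← hp, inner_add_right, real_inner_smul_right, real_inner_smul_right, hpe] at h1
    have h2 : -|g u - g z| ≤ (1 - τ n) * ⟪p, z - u⟫ := by
      have h3 := mul_le_mul_of_nonneg_left (hlower n) (by linarith [hτ1 n] : 0 ≤ 1 - τ n)
      have h4 := mul_le_of_le_one_left (abs_nonneg (g u - g z))
        (by linarith [hτ0 n] : 1 - τ n ≤ 1)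
      have h5 := mul_le_mul_of_nonneg_left (neg_abs_le (g u - g z))
        (by linarith [hτ1 n] : 0 ≤ 1 - τ n)
      linarith
    linarith [hbelow n]
  obtain ⟨n, hn⟩ := ((hnorm.const_mul_atTop hr).eventually_gt_atTop
    ((f z + 1) - (f z - ‖f' z‖ * ‖u - z‖) + |g u - g z|)).exists
  exact absurd (hupper n) (not_le.2 hn)

/-- A lower semicontinuous proper convex function is bounded below by a function
`a - b * ‖·‖`. -/
theorem exists_sub_mul_norm_le_of_convex [ProperSpace E] {R : E → EReal}
    (hbot : ∀ z, R z ≠ ⊥) (hlsc : LowerSemicontinuous R)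
    (hconv : ConvexOn ℝ {z | R z ≠ ⊤} (fun z => (R z).toReal)) {z : E} (hz : R z ≠ ⊤) :
    ∃ a b : ℝ, 0 ≤ b ∧ ∀ u, ((a - b * ‖u‖ : ℝ) : EReal) ≤ R u := by
  obtain ⟨w, hw, hwmin⟩ := LowerSemicontinuousOn.exists_isMinOn
    ⟨z, Metric.mem_closedBall_self zero_le_one⟩ (isCompact_closedBall z 1)
    (hlsc.lowerSemicontinuousOn _)
  have hmin : ∀ v ∈ Metric.closedBall z 1, R v ≠ ⊤ → (R w).toReal ≤ (R v).toReal :=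
    fun v hv hvt => EReal.toReal_le_toReal (hwmin hv) (hbot w) hvt
  set m := (R w).toReal
  have hmz : m ≤ (R z).toReal := hmin z (Metric.mem_closedBall_self zero_le_one) hz
  set b := (R z).toReal - m with hb
  have hb0 : 0 ≤ b := by linarith
  refine ⟨m - b * ‖z‖, b, hb0, fun u => ?_⟩
  by_cases hu : R u = ⊤
  · simp [hu]
  rw [← EReal.coe_toReal hu (hbot u), EReal.coe_le_coe_iff]
  have hnorm : b * ‖u - z‖ ≤ b * (‖u‖ + ‖z‖) := mul_le_mul_of_nonneg_left (norm_sub_le u z) hb0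
  suffices h : m - b * ‖u - z‖ ≤ (R u).toReal by linarith
  rcases le_or_gt ‖u - z‖ 1 with h1 | h1
  · have := hmin u (by rwa [Metric.mem_closedBall, dist_eq_norm]) hu
    have := mul_nonneg hb0 (norm_nonneg (u - z))
    linarith
  · have hpos : 0 < ‖u - z‖ := by linarith
    set q := ‖u - z‖⁻¹ with hq
    have hq0 : 0 < q := inv_pos.2 hpos
    have hq1 : q ≤ 1 := inv_le_one_of_one_le₀ h1.le
    have hqn : q * ‖u - z‖ = 1 := inv_mul_cancel₀ hpos.ne'
    have hmem := hconv.1 (x := u) hu (y := z) hz hq0.le (sub_nonneg.2 hq1) (by ring)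
    have hle := hconv.2 (x := u) hu (y := z) hz hq0.le (sub_nonneg.2 hq1) (by ring)
    have hmle := hmin (q • u + (1 - q) • z) (by
      have heq : q • u + (1 - q) • z - z = q • (u - z) := by module
      rw [Metric.mem_closedBall, dist_eq_norm, heq, norm_smul, Real.norm_of_nonneg hq0.le, hqn])
      hmem
    simp only [smul_eq_mul] at hle
    refine le_of_mul_le_mul_left ?_ hq0
    have : q * (m - b * ‖u - z‖) = q * m - b := by linear_combination (-b) * hqn
    have : 0 ≤ q * b := mul_nonneg hq0.le hb0
    have : q * b = q * (R z).toReal - q * m := by rw [hb]; ring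
    linarith

theorem lowerSemicontinuous_coe_mul {X : Type*} [TopologicalSpace X] {f : X → EReal} (hf : LowerSemicontinuous f) {a : ℝ}
    (ha : 0 < a) : LowerSemicontinuous fun z => (a : EReal) * f z := by
  have hcont : Continuous fun y : EReal => (a : EReal) * y := by
    refine continuous_iff_continuousAt.2 fun y => ?_
    exact ContinuousAt.comp (f := fun y : EReal => ((a : EReal), y))
      (g := fun p : EReal × EReal => p.1 * p.2)
      (EReal.continuousAt_mul (by simp [ha.ne']) (by simp [ha.ne'])
        (by simp) (by simp)) (by fun_prop)
  exact hcont.comp_lowerSemicontinuous hf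
    fun _ _ h => mul_le_mul_of_nonneg_left h (by exact_mod_cast ha.le)

end BregmanProx

/-- well-definedness of the Bregman proximal mapping. For a Legendre kernel
`φ` (proper, lsc, convex, `int dom φ = C`, differentiable and strictly convex on `C`,
supercoercive and essentially smooth) and a proper lsc convex `R` with `dom R ∩ C ≠ ∅`,
the problem `min_{u ∈ closure C} α R(u) + D_φ(u, x)` has exactly one solution for every
`x ∈ C`, `α > 0`, and this solution lies in `C`. -/
theorem bregman_prox_well_defined {d : ℕ}
    (C : Set (EuclideanSpace ℝ (Fin d)))
    (hCne : C.Nonempty) (hCopen : IsOpen C) (hCconv : Convex ℝ C)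
    (φ : EuclideanSpace ℝ (Fin d) → EReal)
    -- φ is proper
    (hφ_ne_top : ∃ z, φ z ≠ ⊤) (hφ_ne_bot : ∀ z, φ z ≠ ⊥)
    -- φ is lower semicontinuous and convex
    (hφ_lsc : LowerSemicontinuous φ)
    (hφ_conv : ∀ u v : EuclideanSpace ℝ (Fin d), ∀ t : ℝ, 0 ≤ t → t ≤ 1 →
      φ (t • u + (1 - t) • v) ≤ (t : EReal) * φ u + ((1 - t : ℝ) : EReal) * φ v)
    -- int dom φ = C
    (hφ_int_dom : interior {z | φ z ≠ ⊤} = C)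
    -- φ is differentiable on C, with gradient φ'
    (φ' : EuclideanSpace ℝ (Fin d) → EuclideanSpace ℝ (Fin d))
    (hφ_diff : ∀ z ∈ C, HasGradientAt (fun u => (φ u).toReal) (φ' z) z)
    -- φ is strictly convex on C
    (hφ_strict : StrictConvexOn ℝ C (fun u => (φ u).toReal))
    -- φ is supercoercive: φ(z)/‖z‖ → ∞ as ‖z‖ → ∞
    (hφ_super : ∀ M : ℝ, ∃ ρ : ℝ, ∀ z, ρ ≤ ‖z‖ → ((M * ‖z‖ : ℝ) : EReal) ≤ φ z)
    -- φ is essentially smooth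
    (hφ_ess : ∀ (xs : ℕ → EuclideanSpace ℝ (Fin d)) (b : EuclideanSpace ℝ (Fin d)),
      (∀ n, xs n ∈ C) → b ∈ frontier {z | φ z ≠ ⊤} →
        Tendsto xs atTop (nhds b) → Tendsto (fun n => ‖φ' (xs n)‖) atTop atTop)
    -- R is proper, lower semicontinuous and convex with dom R ∩ C ≠ ∅
    (R : EuclideanSpace ℝ (Fin d) → EReal)
    (hR_ne_top : ∃ z, R z ≠ ⊤) (hR_ne_bot : ∀ z, R z ≠ ⊥)
    (hR_lsc : LowerSemicontinuous R)
    (hR_conv : ∀ u v : EuclideanSpace ℝ (Fin d), ∀ t : ℝ, 0 ≤ t → t ≤ 1 →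
      R (t • u + (1 - t) • v) ≤ (t : EReal) * R u + ((1 - t : ℝ) : EReal) * R v)
    (hR_dom : ∃ z ∈ C, R z ≠ ⊤)
    (x : EuclideanSpace ℝ (Fin d)) (hx : x ∈ C) (α : ℝ) (hα : 0 < α) :
    ∃ u ∈ C,
      (∀ v ∈ closure C,
        (α : EReal) * R u + (φ u - φ x - ((⟪φ' x, u - x⟫ : ℝ) : EReal)) ≤
          (α : EReal) * R v + (φ v - φ x - ((⟪φ' x, v - x⟫ : ℝ) : EReal))) ∧
      (∀ w ∈ closure C,
        (∀ v ∈ closure C,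
          (α : EReal) * R w + (φ w - φ x - ((⟪φ' x, w - x⟫ : ℝ) : EReal)) ≤
            (α : EReal) * R v + (φ v - φ x - ((⟪φ' x, v - x⟫ : ℝ) : EReal))) → w = u) := by
  obtain ⟨z, hzC, hzR⟩ := hR_dom
  have hC_dom : C ⊆ {v | φ v ≠ ⊤} := hφ_int_dom ▸ interior_subset
  set f : EuclideanSpace ℝ (Fin d) → ℝ := fun v => (φ v).toReal with hf_def
  have hf : ConvexOn ℝ {v | φ v ≠ ⊤} f := convexOn_toReal_of_convex hφ_ne_bot hφ_conv
  have hr : ConvexOn ℝ {v | R v ≠ ⊤} (fun v => (R v).toReal) :=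
    convexOn_toReal_of_convex hR_ne_bot hR_conv
  let c : EuclideanSpace ℝ (Fin d) → ℝ := fun v => -f x - ⟪φ' x, v - x⟫
  have hc_cont : Continuous c := by fun_prop
  have hc_conv : ConvexOn ℝ {v | R v ≠ ⊤} c := by
    refine ⟨hr.1, fun u _ v _ a b _ _ hab => le_of_eq ?_⟩
    obtain rfl : b = 1 - a := by linarith
    simp only [c, inner_sub_right, inner_add_right, real_inner_smul_right, smul_eq_mul]
    ring
  let g : EuclideanSpace ℝ (Fin d) → ℝ := fun v => α * (R v).toReal + c v
  have hg : ConvexOn ℝ {v | R v ≠ ⊤} g := (hr.smul hα.le).add hc_conv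
  -- the objective, with the finite part of the Bregman distance collected in `c`
  set F : EuclideanSpace ℝ (Fin d) → EReal := fun v =>
    (α : EReal) * R v + (φ v - φ x - ((⟪φ' x, v - x⟫ : ℝ) : EReal)) with hF_def
  have hF : ∀ v, F v = (α : EReal) * R v + (φ v + (c v : EReal)) := fun v => by
    have h : φ v - φ x - ((⟪φ' x, v - x⟫ : ℝ) : EReal) = φ v + (c v : EReal) := by
      rw [← EReal.coe_toReal (hC_dom hx) (hφ_ne_bot x), sub_eq_add_neg, sub_eq_add_neg, add_assoc]
      simp only [c, hf_def, sub_eq_add_neg, EReal.coe_add, EReal.coe_neg]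
    simp only [hF_def, h]
  have hαR : ∀ v, (α : EReal) * R v ≠ ⊥ := fun v => by
    by_cases hv : R v = ⊤
    · rw [hv, EReal.coe_mul_top_of_pos hα]
      exact top_ne_bot
    · rw [← EReal.coe_toReal hv (hR_ne_bot v), ← EReal.coe_mul]
      exact EReal.coe_ne_bot _
  have hφc : ∀ v, φ v + (c v : EReal) ≠ ⊥ := fun v =>
    EReal.add_ne_bot_iff.2 ⟨hφ_ne_bot v, EReal.coe_ne_bot _⟩
  have hF_coe : ∀ v, φ v ≠ ⊤ → R v ≠ ⊤ → F v = ((f v + g v : ℝ) : EReal) := fun v hv hv' => by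
    rw [hF, ← EReal.coe_toReal hv (hφ_ne_bot v), ← EReal.coe_toReal hv' (hR_ne_bot v)]
    norm_cast
    simp only [f, g]
    ring
  have hF_dom : ∀ v, F v ≠ ⊤ → φ v ≠ ⊤ ∧ R v ≠ ⊤ := fun v hv => by
    rw [hF, EReal.add_ne_top_iff_ne_top₂ (hαR v) (hφc v),
      EReal.add_ne_top_iff_ne_top₂ (hφ_ne_bot v) (EReal.coe_ne_bot _)] at hv
    refine ⟨hv.2.1, fun h => hv.1 ?_⟩
    rw [h, EReal.coe_mul_top_of_pos hα]
  have hF_lsc : LowerSemicontinuous F := by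
    have h1 : LowerSemicontinuous fun v => φ v + (c v : EReal) :=
      hφ_lsc.add' (continuous_coe_real_ereal.comp hc_cont).lowerSemicontinuous fun v =>
        EReal.continuousAt_add (.inr (EReal.coe_ne_bot _)) (.inl (hφ_ne_bot v))
    have h2 := (lowerSemicontinuous_coe_mul hR_lsc hα).add' h1 fun v =>
        EReal.continuousAt_add (.inr (hφc v)) (.inl (hαR v))
    rwa [funext hF]
  have hzF : F z ≠ ⊤ := by
    rw [hF_coe z (hC_dom hzC) hzR]
    exact EReal.coe_ne_top _
  -- every minimizer over `closure C` lies in `C`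
  have hmem : ∀ u, (∀ v ∈ closure C, F u ≤ F v) → u ∈ C ∧ R u ≠ ⊤ := fun u hu => by
    obtain ⟨huφ, huR⟩ := hF_dom u (ne_top_of_le_ne_top hzF (hu z (subset_closure hzC)))
    refine ⟨?_, huR⟩
    rw [← hφ_int_dom]
    refine mem_interior_of_minimizer_add hf hg (by rwa [hφ_int_dom]) (by rwa [hφ_int_dom])
      huφ huR (by rwa [hφ_int_dom]) hzR fun v hv hvR => ?_
    rw [hφ_int_dom] at hv
    have h := hu v (subset_closure hv)
    rwa [hF_coe u huφ huR, hF_coe v (hC_dom hv) hvR, EReal.coe_le_coe_iff] at h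
  obtain ⟨u, huC, hu⟩ : ∃ u ∈ closure C, ∀ v ∈ closure C, F u ≤ F v := by
    obtain ⟨a, b, hb, hab⟩ := exists_sub_mul_norm_le_of_convex hR_ne_bot hR_lsc hr hzR
    obtain ⟨ρ, hρ⟩ := hφ_super (α * b + ‖φ' x‖ + 1)
    let ρ' : ℝ := max (max ρ ‖z‖) (f z + g z - α * a + f x + ‖φ' x‖ * ‖x‖)
    have hfar : ∀ v, ρ' ≤ ‖v‖ → F z ≤ F v := fun v hv => by
      by_cases hvF : F v = ⊤
      · simp [hvF]
      obtain ⟨hvφ, hvR⟩ := hF_dom v hvF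
      rw [hF_coe v hvφ hvR, hF_coe z (hC_dom hzC) hzR, EReal.coe_le_coe_iff]
      have h1 := hab v
      rw [← EReal.coe_toReal hvR (hR_ne_bot v), EReal.coe_le_coe_iff] at h1
      have h2 := hρ v ((le_max_left _ _).trans ((le_max_left _ _).trans hv))
      rw [← EReal.coe_toReal hvφ (hφ_ne_bot v), EReal.coe_le_coe_iff] at h2
      have h3 := (le_max_right _ _).trans hv
      have h4 := (real_inner_le_norm (φ' x) (v - x)).trans
        (mul_le_mul_of_nonneg_left (norm_sub_le v x) (norm_nonneg _))
      have h5 := mul_le_mul_of_nonneg_left h1 hα.le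
      simp only [f, g, c] at h2 h3 ⊢
      linarith
    obtain ⟨u, hu, humin⟩ := LowerSemicontinuousOn.exists_isMinOn
      (s := closure C ∩ Metric.closedBall 0 ρ')
      ⟨z, subset_closure hzC, by
        rw [mem_closedBall_zero_iff]
        exact (le_max_right _ _).trans (le_max_left _ _)⟩
      ((isCompact_closedBall 0 ρ').inter_left isClosed_closure) (hF_lsc.lowerSemicontinuousOn _)
    refine ⟨u, hu.1, fun v hv => ?_⟩
    rcases le_total ‖v‖ ρ' with h | h
    · exact humin ⟨hv, mem_closedBall_zero_iff.2 h⟩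
    · refine le_trans (humin ⟨subset_closure hzC, ?_⟩) (hfar v h)
      rw [mem_closedBall_zero_iff]
      exact (le_max_right _ _).trans (le_max_left _ _)
  obtain ⟨huC', huR⟩ := hmem u hu
  refine ⟨u, huC', hu, fun w hwC hw => ?_⟩
  obtain ⟨hwC', hwR⟩ := hmem w hw
  have hstrict : StrictConvexOn ℝ (C ∩ {v | R v ≠ ⊤}) (f + g) :=
    (hφ_strict.subset Set.inter_subset_left (hCconv.inter hr.1)).add_convexOn
      (hg.subset Set.inter_subset_right (hCconv.inter hr.1))
  have hminOn : ∀ y ∈ C ∩ {v | R v ≠ ⊤}, (∀ v ∈ closure C, F y ≤ F v) →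
      IsMinOn (f + g) (C ∩ {v | R v ≠ ⊤}) y := fun y hy hmin v hv => by
    have h := hmin v (subset_closure hv.1)
    rwa [hF_coe y (hC_dom hy.1) hy.2, hF_coe v (hC_dom hv.1) hv.2, EReal.coe_le_coe_iff] at h
  exact hstrict.eq_of_isMinOn (hminOn w ⟨hwC', hwR⟩ hw) (hminOn u ⟨huC', huR⟩ hu)
    ⟨hwC', hwR⟩ ⟨huC', huR⟩
end

section
/- Let φ : ℝ^d → ℝ be differentiable and μ-strongly convex with μ > 0, and let R : ℝ^d → ℝ ∪ {+∞} be proper and convex. For i = 1, 2, let x_i, x_i⁺ ∈ ℝ^d satisfy x_i − ∇φ(x_i⁺) ∈ ∂R(x_i⁺). Then ‖x₁⁺ − x₂⁺‖ ≤ (1/μ)‖x₁ − x₂‖. -/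
open scoped RealInnerProductSpace

/-- The first-order characterization of convexity: a convex function lies above its tangents. -/
theorem ConvexOn.add_fderiv_sub_le {E : Type*} [NormedAddCommGroup E] [NormedSpace ℝ E]
    {g : E → ℝ} {g' : E →L[ℝ] ℝ} {x : E} (hg : ConvexOn ℝ Set.univ g)
    (hd : HasFDerivAt g g' x) (y : E) : g x + g' (y - x) ≤ g y := by
  have hline : ConvexOn ℝ Set.univ (g ∘ AffineMap.lineMap (k := ℝ) x y) := by
    simpa using hg.comp_affineMap (AffineMap.lineMap (k := ℝ) x y)
  have hderiv : HasDerivAt (g ∘ AffineMap.lineMap (k := ℝ) x y) (g' (y - x)) 0 := by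
    refine HasFDerivAt.comp_hasDerivAt (0 : ℝ) ?_ AffineMap.hasDerivAt_lineMap
    simpa using hd
  have h := hline.le_slope_of_hasDerivAt (Set.mem_univ 0) (Set.mem_univ 1) one_pos hderiv
  simp only [slope_def_field, Function.comp_apply, AffineMap.lineMap_apply_one,
    AffineMap.lineMap_apply_zero, sub_zero, div_one] at h
  linarith

/-- The gradient of a `μ`-strongly convex function is `μ`-strongly monotone. -/
theorem ConvexOn.mul_norm_sub_sq_le_inner_gradient_sub {E : Type*} [NormedAddCommGroup E]
    [InnerProductSpace ℝ E] [CompleteSpace E] {φ : E → ℝ} {μ : ℝ} {x y v w : E}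
    (hφ : ConvexOn ℝ Set.univ (fun z => φ z - μ / 2 * ‖z‖ ^ 2))
    (hx : HasGradientAt φ v x) (hy : HasGradientAt φ w y) :
    μ * ‖x - y‖ ^ 2 ≤ ⟪v - w, x - y⟫ := by
  have hd {a z : E} (h : HasGradientAt φ a z) :=
    h.hasFDerivAt.sub ((hasStrictFDerivAt_norm_sq z).hasFDerivAt.const_mul (μ / 2))
  have hxy := hφ.add_fderiv_sub_le (hd hx) y
  have hyx := hφ.add_fderiv_sub_le (hd hy) x
  simp only [sub_apply, smul_apply, smul_eq_mul,
    InnerProductSpace.toDual_apply_apply, innerSL_apply_apply, nsmul_eq_mul, Nat.cast_ofNat,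
    inner_sub_right, real_inner_self_eq_norm_sq] at hxy hyx
  rw [norm_sub_sq_real]
  simp only [inner_sub_left, inner_sub_right]
  rw [real_inner_comm x y] at *
  linarith

/-- An extended-real-valued function that is proper is finite wherever it has a subgradient. -/
theorem EReal.ne_top_of_forall_add_coe_le {α : Type*} {R : α → EReal} {x : α} {ℓ : α → ℝ}
    (hR : ∃ z, R z ≠ ⊤) (h : ∀ u, R x + (ℓ u : EReal) ≤ R u) : R x ≠ ⊤ := by
  obtain ⟨z, hz⟩ := hR
  intro hx
  have := h z
  rw [hx, EReal.top_add_coe, top_le_iff] at this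
  exact hz this

/-- Subgradients of a proper function are monotone. -/
theorem EReal.inner_sub_nonneg_of_subgradient {E : Type*} [NormedAddCommGroup E]
    [InnerProductSpace ℝ E] {R : E → EReal} {x y v w : E}
    (hR_top : ∃ z, R z ≠ ⊤) (hR_bot : ∀ z, R z ≠ ⊥)
    (hv : ∀ u, R x + ((⟪v, u - x⟫ : ℝ) : EReal) ≤ R u)
    (hw : ∀ u, R y + ((⟪w, u - y⟫ : ℝ) : EReal) ≤ R u) :
    0 ≤ ⟪v - w, x - y⟫ := by
  have hvy := hv y
  have hwx := hw x
  rw [← EReal.coe_toReal (EReal.ne_top_of_forall_add_coe_le hR_top hv) (hR_bot x),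
    ← EReal.coe_toReal (EReal.ne_top_of_forall_add_coe_le hR_top hw) (hR_bot y),
    ← EReal.coe_add, EReal.coe_le_coe_iff] at hvy hwx
  simp only [inner_sub_left, inner_sub_right] at *
  linarith

/-- generalized nonexpansiveness of the Bregman proximal mapping. If `φ` is
differentiable and `μ`-strongly convex and `x_i − ∇φ(x_i⁺) ∈ ∂R(x_i⁺)` for `i = 1, 2`,
then `‖x₁⁺ − x₂⁺‖ ≤ (1/μ)‖x₁ − x₂‖`. -/
theorem bregman_prox_nonexpansive {d : ℕ}
    (φ : EuclideanSpace ℝ (Fin d) → ℝ)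
    (φ' : EuclideanSpace ℝ (Fin d) → EuclideanSpace ℝ (Fin d))
    (μ : ℝ) (hμ : 0 < μ)
    (hφ_diff : ∀ z, HasGradientAt φ (φ' z) z)
    (hφ_sconv : ConvexOn ℝ Set.univ (fun z => φ z - μ / 2 * ‖z‖ ^ 2))
    (R : EuclideanSpace ℝ (Fin d) → EReal)
    (hR_ne_top : ∃ z, R z ≠ ⊤) (hR_ne_bot : ∀ z, R z ≠ ⊥)
    (hR_conv : ∀ u v : EuclideanSpace ℝ (Fin d), ∀ t : ℝ, 0 ≤ t → t ≤ 1 →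
      R (t • u + (1 - t) • v) ≤ (t : EReal) * R u + ((1 - t : ℝ) : EReal) * R v)
    (x₁ x₂ x₁p x₂p : EuclideanSpace ℝ (Fin d))
    -- x₁ − ∇φ(x₁⁺) ∈ ∂R(x₁⁺)
    (h₁ : ∀ u, R x₁p + ((⟪x₁ - φ' x₁p, u - x₁p⟫ : ℝ) : EReal) ≤ R u)
    -- x₂ − ∇φ(x₂⁺) ∈ ∂R(x₂⁺)
    (h₂ : ∀ u, R x₂p + ((⟪x₂ - φ' x₂p, u - x₂p⟫ : ℝ) : EReal) ≤ R u) :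
    ‖x₁p - x₂p‖ ≤ (1 / μ) * ‖x₁ - x₂‖ := by
  have hφ := hφ_sconv.mul_norm_sub_sq_le_inner_gradient_sub (hφ_diff x₁p) (hφ_diff x₂p)
  have hR := EReal.inner_sub_nonneg_of_subgradient hR_ne_top hR_ne_bot h₁ h₂
  have hcs := real_inner_le_norm (x₁ - x₂) (x₁p - x₂p)
  have hsplit : ⟪x₁ - φ' x₁p - (x₂ - φ' x₂p), x₁p - x₂p⟫
      = ⟪x₁ - x₂, x₁p - x₂p⟫ - ⟪φ' x₁p - φ' x₂p, x₁p - x₂p⟫ := by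
    rw [← inner_sub_left, sub_sub_sub_comm]
  rw [one_div, ← div_eq_inv_mul, le_div_iff₀' hμ]
  rcases (norm_nonneg (x₁p - x₂p)).eq_or_lt with h0 | hpos
  · simp [← h0]
  · refine le_of_mul_le_mul_right ?_ hpos
    linarith [sq ‖x₁p - x₂p‖, mul_assoc μ ‖x₁p - x₂p‖ ‖x₁p - x₂p‖]
end

section
/- Let φ : ℝ^d → ℝ be differentiable and μ-strongly convex (μ > 0) with ∇φ Lipschitz continuous with constant L_φ; let F : ℝ^d → ℝ be differentiable and L_F-smooth adaptable with respect to φ on ℝ^d; let R : ℝ^d → ℝ ∪ {+∞} be proper, lower semicontinuous and convex; let α > 0 and x ∈ ℝ^d. Let x⁺ be the unique point satisfying ∇φ(x) − α∇F(x) − ∇φ(x⁺) ∈ α∂R(x⁺), and set G_α(x) := (x − x⁺)/α. Then there exists v ∈ ∂R(x⁺) such that ‖∇F(x⁺) + v‖ ≤ (1 + αL_F)·L_φ·‖G_α(x)‖; that is, dist(0, ∇F(x⁺) + ∂R(x⁺)) ≤ (1 + αL_F)L_φ‖G_α(x)‖. -/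
open scoped RealInnerProductSpace

section GradientInequalities

variable {E : Type*} [NormedAddCommGroup E] [InnerProductSpace ℝ E]

/-- Two-sided quadratic bounds on the linearization error force the gradient to be Lipschitz with
the same constant. -/
lemma norm_gradient_sub_le_of_quadratic_bounds {f : E → ℝ} {f' : E → E} {L : ℝ}
    (hupper : ∀ x y, f y ≤ f x + ⟪f' x, y - x⟫ + L / 2 * ‖y - x‖ ^ 2)
    (hlower : ∀ x y, f x + ⟪f' x, y - x⟫ - L / 2 * ‖y - x‖ ^ 2 ≤ f y)
    {x y : E} (hL : 0 ≤ L * ‖y - x‖) : ‖f' y - f' x‖ ≤ L * ‖y - x‖ := by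
  rcases eq_or_ne x y with rfl | hxy
  · simp
  rcases eq_or_ne (f' y - f' x) 0 with hg | hg
  · rwa [hg, norm_zero]
  have hδ : 0 < ‖y - x‖ := norm_pos_iff.2 (sub_ne_zero.2 hxy.symm)
  have hg' : 0 < ‖f' y - f' x‖ := norm_pos_iff.2 hg
  -- Compare the bounds from `x` and `y` at the points `midpoint ± p`.
  have key (p : E) : 2 * ⟪f' y - f' x, p⟫ ≤ 2 * L * ‖p‖ ^ 2 + L / 2 * ‖y - x‖ ^ 2 := by
    set h : E := (2⁻¹ : ℝ) • (y - x) with hh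
    have hy : y = x + h + h := by rw [hh]; module
    have h₁ := hupper x (x + h + p)
    have h₂ := hlower y (x + h + p)
    have h₃ := hupper y (x + h - p)
    have h₄ := hlower x (x + h - p)
    have e₁ : x + h + p - x = h + p := by abel
    have e₂ : x + h + p - y = p - h := by rw [hy]; abel
    have e₃ : x + h - p - y = -(h + p) := by rw [hy]; abel
    have e₄ : x + h - p - x = h - p := by abel
    have e₅ : ‖y - x‖ ^ 2 = 4 * ‖h‖ ^ 2 := by
      rw [hh, norm_smul]; norm_num; ring
    rw [e₁] at h₁
    rw [e₂, norm_sub_rev] at h₂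
    rw [e₃, norm_neg] at h₃
    rw [e₄] at h₄
    rw [e₅]
    rw [norm_add_sq_real] at h₁ h₃
    rw [norm_sub_sq_real] at h₂ h₄
    simp only [inner_add_right, inner_sub_right, inner_neg_right, inner_sub_left] at *
    linarith
  have h := key ((‖y - x‖ / (2 * ‖f' y - f' x‖)) • (f' y - f' x))
  rw [inner_smul_right, real_inner_self_eq_norm_sq, norm_smul, Real.norm_of_nonneg (by positivity)]
    at h
  have e₁ : 2 * (‖y - x‖ / (2 * ‖f' y - f' x‖) * ‖f' y - f' x‖ ^ 2) =
      ‖f' y - f' x‖ * ‖y - x‖ := by field_simp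
  have e₂ : ‖y - x‖ / (2 * ‖f' y - f' x‖) * ‖f' y - f' x‖ = ‖y - x‖ / 2 := by field_simp
  rw [e₁, e₂] at h
  refine le_of_mul_le_mul_right ?_ hδ
  linarith

variable [CompleteSpace E]

/-- The derivative of a function along the line `t ↦ x + t • v`. -/
lemma HasGradientAt.hasDerivAt_line {f : E → ℝ} {g x v : E} {t : ℝ}
    (hf : HasGradientAt f g (x + t • v)) :
    HasDerivAt (fun s : ℝ => f (x + s • v)) ⟪g, v⟫ t := by
  have hline : HasDerivAt (fun s : ℝ => x + s • v) v t := by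
    simpa using ((hasDerivAt_id t).smul_const v).const_add x
  exact hf.hasFDerivAt.comp_hasDerivAt t hline

/-- The first-order lower bound for a differentiable convex function. -/
lemma ConvexOn.add_inner_gradient_le {f : E → ℝ} {g x : E} (hconv : ConvexOn ℝ Set.univ f)
    (hf : HasGradientAt f g x) (y : E) : f x + ⟪g, y - x⟫ ≤ f y := by
  have hline : ConvexOn ℝ Set.univ (fun s : ℝ => f (x + s • (y - x))) := by
    have h := hconv.comp_affineMap (AffineMap.lineMap x y : ℝ →ᵃ[ℝ] E)
    simpa [Function.comp_def, AffineMap.lineMap_apply, add_comm] using h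
  have hderiv : HasDerivAt (fun s : ℝ => f (x + s • (y - x))) ⟪g, y - x⟫ 0 :=
    HasGradientAt.hasDerivAt_line (by simpa using hf)
  have h := hline.le_slope_of_hasDerivAt (Set.mem_univ 0) (Set.mem_univ 1) zero_lt_one hderiv
  simp [slope_def_field] at h
  linarith

/-- The descent lemma for a function with Lipschitz gradient. -/
lemma le_add_inner_gradient_add_norm_sq {f : E → ℝ} {f' : E → E} {L : ℝ}
    (hf : ∀ z, HasGradientAt f (f' z) z) (hL : ∀ z w, ‖f' z - f' w‖ ≤ L * ‖z - w‖) (x y : E) :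
    f y ≤ f x + ⟪f' x, y - x⟫ + L / 2 * ‖y - x‖ ^ 2 := by
  set v := y - x with hv
  let ψ : ℝ → ℝ := fun t => f (x + t • v) - t * ⟪f' x, v⟫ - L / 2 * ‖v‖ ^ 2 * t ^ 2
  have hψ (t : ℝ) :
      HasDerivAt ψ (⟪f' (x + t • v), v⟫ - ⟪f' x, v⟫ - L * ‖v‖ ^ 2 * t) t := by
    have h := (((hf (x + t • v)).hasDerivAt_line).sub
      ((hasDerivAt_id t).mul_const ⟪f' x, v⟫)).sub
      ((hasDerivAt_pow 2 t).const_mul (L / 2 * ‖v‖ ^ 2))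
    refine h.congr_deriv ?_
    norm_num
    ring
  have hanti : AntitoneOn ψ (Set.Icc 0 1) := by
    refine antitoneOn_of_deriv_nonpos (convex_Icc 0 1)
      (fun t _ => (hψ t).continuousAt.continuousWithinAt)
      (fun t _ => (hψ t).differentiableAt.differentiableWithinAt) fun t ht => ?_
    rw [interior_Icc] at ht
    rw [(hψ t).deriv, ← inner_sub_left]
    have hlip : ‖f' (x + t • v) - f' x‖ ≤ L * (t * ‖v‖) := by
      simpa [norm_smul, abs_of_pos ht.1] using hL (x + t • v) x
    have hcs := real_inner_le_norm (f' (x + t • v) - f' x) v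
    nlinarith [mul_le_mul_of_nonneg_right hlip (norm_nonneg v)]
  have h := hanti (Set.left_mem_Icc.2 zero_le_one) (Set.right_mem_Icc.2 zero_le_one) zero_le_one
  simp [ψ, hv] at h
  linarith

/-- A function that is smooth adaptable relative to a kernel with Lipschitz gradient has a
Lipschitz gradient. -/
lemma norm_gradient_sub_le_of_smooth_adaptable {φ F : E → ℝ} {φ' F' : E → E} {Lφ LF : ℝ}
    (hφ : ∀ z, HasGradientAt φ (φ' z) z) (hLφ : ∀ z w, ‖φ' z - φ' w‖ ≤ Lφ * ‖z - w‖)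
    (hF : ∀ z, HasGradientAt F (F' z) z) (hLF : 0 ≤ LF)
    (hadd : ConvexOn ℝ Set.univ (fun z => LF * φ z + F z))
    (hsub : ConvexOn ℝ Set.univ (fun z => LF * φ z - F z)) (x y : E) :
    ‖F' y - F' x‖ ≤ LF * Lφ * ‖y - x‖ := by
  have hdesc (x y : E) := mul_le_mul_of_nonneg_left
    (le_add_inner_gradient_add_norm_sq hφ hLφ x y) hLF
  have gadd (z : E) : HasGradientAt (fun z => LF * φ z + F z) (LF • φ' z + F' z) z := by
    rw [hasGradientAt_iff_hasFDerivAt, map_add, map_smul]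
    exact ((hφ z).hasFDerivAt.const_mul LF).add (hF z).hasFDerivAt
  have gsub (z : E) : HasGradientAt (fun z => LF * φ z - F z) (LF • φ' z - F' z) z := by
    rw [hasGradientAt_iff_hasFDerivAt, map_sub, map_smul]
    exact ((hφ z).hasFDerivAt.const_mul LF).sub (hF z).hasFDerivAt
  refine norm_gradient_sub_le_of_quadratic_bounds (f := F) (fun x y => ?_) (fun x y => ?_) ?_
  · have h := hsub.add_inner_gradient_le (gsub x) y
    rw [inner_sub_left, real_inner_smul_left] at h
    linarith [hdesc x y]
  · have h := hadd.add_inner_gradient_le (gadd x) y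
    rw [inner_add_left, real_inner_smul_left] at h
    linarith [hdesc x y]
  · rw [mul_assoc]
    exact mul_nonneg hLF ((norm_nonneg _).trans (hLφ y x))

end GradientInequalities

/-- near-stationarity of the Bregman proximal gradient update. With `x⁺`
defined by `∇φ(x) − α∇F(x) − ∇φ(x⁺) ∈ α∂R(x⁺)` and `G_α(x) = (x − x⁺)/α`, one has
`dist(0, ∇F(x⁺) + ∂R(x⁺)) ≤ (1 + αL_F)·L_φ·‖G_α(x)‖`. -/
theorem bregman_mapping_subdifferential_bound {d : ℕ}
    (φ F : EuclideanSpace ℝ (Fin d) → ℝ)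
    (φ' F' : EuclideanSpace ℝ (Fin d) → EuclideanSpace ℝ (Fin d))
    (μ : ℝ) (hμ : 0 < μ)
    (hφ_diff : ∀ z, HasGradientAt φ (φ' z) z)
    (hφ_sconv : ConvexOn ℝ Set.univ (fun z => φ z - μ / 2 * ‖z‖ ^ 2))
    (Lφ : ℝ) (hLφ : ∀ z w, ‖φ' z - φ' w‖ ≤ Lφ * ‖z - w‖)
    (hF_diff : ∀ z, HasGradientAt F (F' z) z)
    (LF : ℝ) (hLF : 0 < LF)
    -- F is L_F-smooth adaptable with respect to φ on ℝ^d
    (hsa₁ : ConvexOn ℝ Set.univ (fun z => LF * φ z + F z))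
    (hsa₂ : ConvexOn ℝ Set.univ (fun z => LF * φ z - F z))
    (R : EuclideanSpace ℝ (Fin d) → EReal)
    (hR_ne_top : ∃ z, R z ≠ ⊤) (hR_ne_bot : ∀ z, R z ≠ ⊥)
    (hR_lsc : LowerSemicontinuous R)
    (hR_conv : ∀ u v : EuclideanSpace ℝ (Fin d), ∀ t : ℝ, 0 ≤ t → t ≤ 1 →
      R (t • u + (1 - t) • v) ≤ (t : EReal) * R u + ((1 - t : ℝ) : EReal) * R v)
    (α : ℝ) (hα : 0 < α)
    (x xp : EuclideanSpace ℝ (Fin d))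
    -- ∇φ(x) − α∇F(x) − ∇φ(x⁺) ∈ α ∂R(x⁺)
    (hxp : ∀ u, R xp +
        ((⟪α⁻¹ • (φ' x - α • F' x - φ' xp), u - xp⟫ : ℝ) : EReal) ≤ R u) :
    ∃ v : EuclideanSpace ℝ (Fin d),
      (∀ u, R xp + ((⟪v, u - xp⟫ : ℝ) : EReal) ≤ R u) ∧
        ‖F' xp + v‖ ≤ (1 + α * LF) * Lφ * ‖α⁻¹ • (x - xp)‖ := by
  refine ⟨α⁻¹ • (φ' x - α • F' x - φ' xp), hxp, ?_⟩
  have hsplit : F' xp + α⁻¹ • (φ' x - α • F' x - φ' xp) =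
      (F' xp - F' x) + α⁻¹ • (φ' x - φ' xp) := by
    rw [sub_right_comm, smul_sub _ (φ' x - φ' xp), inv_smul_smul₀ hα.ne']
    abel
  have hF := norm_gradient_sub_le_of_smooth_adaptable hφ_diff hLφ hF_diff hLF.le hsa₁ hsa₂ x xp
  have hα' : 0 < α⁻¹ := inv_pos.2 hα
  calc ‖F' xp + α⁻¹ • (φ' x - α • F' x - φ' xp)‖
      ≤ ‖F' xp - F' x‖ + α⁻¹ * ‖φ' x - φ' xp‖ := by
        rw [hsplit]
        refine (norm_add_le _ _).trans_eq ?_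
        rw [norm_smul, Real.norm_of_nonneg hα'.le]
    _ ≤ LF * Lφ * ‖x - xp‖ + α⁻¹ * (Lφ * ‖x - xp‖) := by
        rw [norm_sub_rev x xp] at *
        gcongr
        simpa [norm_sub_rev] using hLφ x xp
    _ = (1 + α * LF) * Lφ * ‖α⁻¹ • (x - xp)‖ := by
        rw [norm_smul, Real.norm_of_nonneg hα'.le]
        field_simp
        ring
end

section
/- Let d ≥ 1, p ∈ ℝ^d, α > 0, λ > 0, δ > 0, and let r ≥ 2 be an integer. Define the kernel φ(W) := (1/2)‖W‖² + (δ/r)‖W‖^r on ℝ^d, and define p⁺ ∈ ℝ^d componentwise by p⁺_j := sign(p_j)·max(|p_j| − αλ, 0). Then: (i) p⁺ is the unique minimizer of p̂ ↦ (1/2)‖p̂ − p‖² + αλ‖p̂‖₁; (ii) the equation δ‖p⁺‖^{r−2}·t^{r−1} + t − 1 = 0 has a unique positive real root t*; and (iii) the unique minimizer of W ↦ φ(W) + ⟨p, W⟩ + αλ‖W‖₁ over ℝ^d is W* = −t*·p⁺. -/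
open scoped RealInnerProductSpace

/-- The ℓ1 norm on `ℝ^d`. -/
noncomputable def l1Norm {d : ℕ} (q : EuclideanSpace ℝ (Fin d)) : ℝ := ∑ j, |q j|

/-- The soft-thresholding objective `p̂ ↦ (1/2)‖p̂ − p‖² + αλ‖p̂‖₁`. -/
noncomputable def softObj {d : ℕ} (p : EuclideanSpace ℝ (Fin d)) (α lam : ℝ)
    (q : EuclideanSpace ℝ (Fin d)) : ℝ :=
  (1 / 2) * ‖q - p‖ ^ 2 + α * lam * l1Norm q

/-- The SBPG subproblem objective `W ↦ φ(W) + ⟨p, W⟩ + αλ‖W‖₁`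
with kernel `φ(W) = (1/2)‖W‖² + (δ/r)‖W‖^r`. -/
noncomputable def subObj {d : ℕ} (p : EuclideanSpace ℝ (Fin d)) (α lam δ : ℝ) (r : ℕ)
    (W : EuclideanSpace ℝ (Fin d)) : ℝ :=
  (1 / 2) * ‖W‖ ^ 2 + (δ / r) * ‖W‖ ^ r + ⟪p, W⟫ + α * lam * l1Norm W

/-- The residual `a - x` of the scalar soft-thresholding `x` of `a` is a subgradient
of `κ|·|` at `x`. -/
theorem softThreshold_residual {a κ x : ℝ} (hκ : 0 ≤ κ)
    (hx : x = Real.sign a * max (|a| - κ) 0) :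
    |a - x| ≤ κ ∧ (a - x) * x = κ * |x| := by
  rcases le_total |a| κ with h | h
  · rw [max_eq_right (by linarith), mul_zero] at hx
    subst hx
    simpa using h
  · rw [max_eq_left (by linarith)] at hx
    rcases lt_trichotomy a 0 with ha | ha | ha
    · rw [Real.sign_of_neg ha, abs_of_neg ha] at hx
      rw [abs_of_neg ha] at h
      have hax : a - x = -κ := by rw [hx]; ring
      rw [hax, abs_neg, abs_of_nonneg hκ, abs_of_nonpos (by linarith : x ≤ 0)]
      exact ⟨le_rfl, by ring⟩
    · subst ha
      simp only [Real.sign_zero, zero_mul] at hx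
      subst hx
      simpa using hκ
    · rw [Real.sign_of_pos ha, abs_of_pos ha] at hx
      rw [abs_of_pos ha] at h
      have hax : a - x = κ := by rw [hx]; ring
      rw [hax, abs_of_nonneg hκ, abs_of_nonneg (by linarith : 0 ≤ x)]
      exact ⟨le_rfl, rfl⟩

/-- The ℓ1 norm is absolutely homogeneous. -/
theorem l1Norm_smul {d : ℕ} (c : ℝ) (q : EuclideanSpace ℝ (Fin d)) :
    l1Norm (c • q) = |c| * l1Norm q := by
  simp [l1Norm, Finset.mul_sum, abs_mul]

/-- Hölder's inequality for the pairing of the sup norm and the ℓ1 norm. -/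
theorem abs_inner_le_mul_l1Norm {d : ℕ} {κ : ℝ} {g : EuclideanSpace ℝ (Fin d)}
    (hg : ∀ j, |g j| ≤ κ) (q : EuclideanSpace ℝ (Fin d)) :
    |⟪g, q⟫| ≤ κ * l1Norm q := by
  rw [PiLp.inner_apply, l1Norm, Finset.mul_sum]
  refine (Finset.abs_sum_le_sum_abs _ _).trans (Finset.sum_le_sum fun j _ => ?_)
  simp only [RCLike.inner_apply, conj_trivial, abs_mul]
  rw [mul_comm]
  exact mul_le_mul_of_nonneg_right (hg j) (abs_nonneg _)

/-- The graph of `x ↦ x ^ (k + 1)` on `[0, ∞)` lies above its tangent lines. -/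
theorem tangent_le_pow_succ {m n : ℝ} (hm : 0 ≤ m) (hn : 0 ≤ n) (k : ℕ) :
    n ^ (k + 1) + (k + 1) * n ^ k * (m - n) ≤ m ^ (k + 1) := by
  induction k with
  | zero => simp
  | succ k ih =>
    have hstep := mul_le_mul_of_nonneg_left ih hm
    have hsq : 0 ≤ ((k : ℝ) + 1) * n ^ k * (m - n) ^ 2 := by positivity
    push_cast
    calc _ = m * (n ^ (k + 1) + (k + 1) * n ^ k * (m - n))
          - ((k : ℝ) + 1) * n ^ k * (m - n) ^ 2 := by ring
      _ ≤ m * m ^ (k + 1) := by linarith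
      _ = _ := by ring

/-- The gradient inequality for `‖·‖ ^ r / r` with `r = k + 2`. -/
theorem norm_pow_gradient_inequality {E : Type*} [NormedAddCommGroup E]
    [InnerProductSpace ℝ E] (V W : E) (k : ℕ) :
    ‖V‖ ^ k * ⟪V, W - V⟫ ≤ (‖W‖ ^ (k + 2) - ‖V‖ ^ (k + 2)) / ((k + 2 : ℕ) : ℝ) := by
  have htangent := tangent_le_pow_succ (norm_nonneg W) (norm_nonneg V) (k + 1)
  have hinner : ⟪V, W - V⟫ ≤ ‖V‖ * (‖W‖ - ‖V‖) := by
    rw [inner_sub_right, real_inner_self_eq_norm_sq]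
    nlinarith [real_inner_le_norm V W]
  have hmul := mul_le_mul_of_nonneg_left hinner (pow_nonneg (norm_nonneg V) k)
  rw [le_div_iff₀ (by positivity)]
  push_cast at htangent ⊢
  have hk : (0 : ℝ) ≤ (k : ℝ) + 2 := by positivity
  calc _ ≤ ‖V‖ ^ k * (‖V‖ * (‖W‖ - ‖V‖)) * ((k : ℝ) + 2) :=
        mul_le_mul_of_nonneg_right hmul hk
    _ = ((k : ℝ) + 1 + 1) * ‖V‖ ^ (k + 1) * (‖W‖ - ‖V‖) := by ring
    _ ≤ _ := by linarith

/-- A point with quadratic growth is the unique minimizer. -/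
theorem unique_minimizer_of_quadratic_growth {E : Type*} [NormedAddCommGroup E]
    {f : E → ℝ} {x : E} (h : ∀ y, f x + (1 / 2) * ‖y - x‖ ^ 2 ≤ f y) :
    (∀ y, f x ≤ f y) ∧ ∀ y, (∀ z, f y ≤ f z) → y = x := by
  refine ⟨fun y => by nlinarith [h y, sq_nonneg ‖y - x‖], fun y hy => ?_⟩
  have hsq : ‖y - x‖ ^ 2 = 0 := le_antisymm (by linarith [h y, hy x]) (sq_nonneg _)
  exact sub_eq_zero.mp (norm_eq_zero.mp (pow_eq_zero_iff two_ne_zero |>.mp hsq))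

/-- For `c ≥ 0` the equation `c * t ^ n + t - 1 = 0` has a unique positive root
when `n ≠ 0`. -/
theorem existsUnique_pos_root {c : ℝ} (hc : 0 ≤ c) {n : ℕ} (hn : n ≠ 0) :
    ∃! t : ℝ, 0 < t ∧ c * t ^ n + t - 1 = 0 := by
  have hcont : ContinuousOn (fun t : ℝ => c * t ^ n + t - 1) (Set.Icc 0 1) := by fun_prop
  obtain ⟨t, ht, hroot⟩ := intermediate_value_Icc zero_le_one hcont
    (show (0 : ℝ) ∈ Set.Icc _ _ by simp [hn, hc])
  have hpos : 0 < t := by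
    refine lt_of_le_of_ne ht.1 ?_
    rintro rfl
    simp [hn] at hroot
  have hmono : ∀ s u : ℝ, 0 < s → s < u → c * s ^ n + s - 1 < c * u ^ n + u - 1 := by
    intro s u hs hsu
    have := mul_le_mul_of_nonneg_left (pow_le_pow_left₀ hs.le hsu.le n) hc
    linarith
  refine ⟨t, ⟨hpos, hroot⟩, fun s hs => ?_⟩
  rcases lt_trichotomy s t with h | h | h
  · exact absurd (hmono s t hs.1 h) (by simp_all)
  · exact h
  · exact absurd (hmono t s hpos h) (by simp_all)

/-- closed-form solution of the SBPG subproblem with polynomial kernel and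
ℓ1 regularization: (i) `p⁺` (soft-thresholding of `p`) is the unique minimizer of
`p̂ ↦ (1/2)‖p̂ − p‖² + αλ‖p̂‖₁`; (ii) `δ‖p⁺‖^{r−2}t^{r−1} + t − 1 = 0` has a unique
positive root `t*`; (iii) `W* = −t*·p⁺` is the unique minimizer of
`W ↦ φ(W) + ⟨p, W⟩ + αλ‖W‖₁`. -/
theorem sbpg_subproblem_closed_form {d : ℕ} (hd : 1 ≤ d)
    (p : EuclideanSpace ℝ (Fin d))
    (α lam δ : ℝ) (hα : 0 < α) (hlam : 0 < lam) (hδ : 0 < δ)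
    (r : ℕ) (hr : 2 ≤ r)
    (pplus : EuclideanSpace ℝ (Fin d))
    (hpplus : ∀ j, pplus j = Real.sign (p j) * max (|p j| - α * lam) 0) :
    ((∀ q, softObj p α lam pplus ≤ softObj p α lam q) ∧
        (∀ q, (∀ q', softObj p α lam q ≤ softObj p α lam q') → q = pplus)) ∧
      (∃! t : ℝ, 0 < t ∧ δ * ‖pplus‖ ^ (r - 2) * t ^ (r - 1) + t - 1 = 0) ∧
      (∀ t : ℝ, 0 < t → δ * ‖pplus‖ ^ (r - 2) * t ^ (r - 1) + t - 1 = 0 →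
        (∀ W, subObj p α lam δ r (-t • pplus) ≤ subObj p α lam δ r W) ∧
          (∀ W, (∀ W', subObj p α lam δ r W ≤ subObj p α lam δ r W') →
            W = -t • pplus)) := by
  have hκ : 0 ≤ α * lam := by positivity
  have hres j := softThreshold_residual hκ (hpplus j)
  have hholder := abs_inner_le_mul_l1Norm (g := p - pplus) fun j => (hres j).1
  have hself : ⟪p - pplus, pplus⟫ = α * lam * l1Norm pplus := by
    rw [PiLp.inner_apply, l1Norm, Finset.mul_sum]
    refine Finset.sum_congr rfl fun j _ => ?_
    rw [← (hres j).2]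
    simp [mul_comm]
  refine ⟨unique_minimizer_of_quadratic_growth fun q => ?_,
    existsUnique_pos_root (by positivity) (by omega), fun t ht hroot =>
    unique_minimizer_of_quadratic_growth fun W => ?_⟩
  · have hexpand : ‖q - p‖ ^ 2 = ‖q - pplus‖ ^ 2 + ‖pplus - p‖ ^ 2
        - 2 * ⟪p - pplus, q⟫ + 2 * ⟪p - pplus, pplus⟫ := by
      simp only [← real_inner_self_eq_norm_sq, inner_sub_left, inner_sub_right,
        real_inner_comm p q, real_inner_comm pplus q, real_inner_comm p pplus]
      ring
    unfold softObj
    linarith [le_of_abs_le (hholder q)]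
  · obtain ⟨k, rfl⟩ := Nat.exists_eq_add_of_le' hr
    set V := -t • pplus with hV
    have hnormV : ‖V‖ = t * ‖pplus‖ := by
      rw [hV, norm_smul, norm_neg, Real.norm_of_nonneg ht.le]
    have hcoeff : (1 + δ * ‖V‖ ^ k) * t = 1 := by
      rw [hnormV, mul_pow]
      simp only [Nat.add_sub_cancel, show k + 2 - 1 = k + 1 by omega] at hroot
      linear_combination hroot
    have hstationary : ∀ U, ⟪pplus, U⟫ = -((1 + δ * ‖V‖ ^ k) * ⟪V, U⟫) := by
      intro U
      rw [hV, real_inner_smul_left, ← hV]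
      linear_combination -⟪pplus, U⟫ * hcoeff
    have hsplit : ∀ U, ⟪p, U⟫ = ⟪p - pplus, U⟫ + ⟪pplus, U⟫ := fun U => by
      rw [inner_sub_left]; ring
    have hbracket : ⟪p - pplus, V⟫ + α * lam * l1Norm V = 0 := by
      rw [hV, l1Norm_smul, real_inner_smul_right, hself, abs_neg, abs_of_pos ht]
      ring
    have hgrad := mul_le_mul_of_nonneg_left (norm_pow_gradient_inequality V W k) hδ.le
    have hsq : ‖W‖ ^ 2 = ‖W - V‖ ^ 2 + ‖V‖ ^ 2 + 2 * ⟪V, W - V⟫ := by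
      simp only [← real_inner_self_eq_norm_sq, inner_sub_left, inner_sub_right,
        real_inner_comm V W]
      ring
    have hlin := hstationary (W - V)
    rw [inner_sub_right pplus] at hlin
    have hdiv : δ * ((‖W‖ ^ (k + 2) - ‖V‖ ^ (k + 2)) / ((k + 2 : ℕ) : ℝ))
        = δ / ((k + 2 : ℕ) : ℝ) * ‖W‖ ^ (k + 2)
          - δ / ((k + 2 : ℕ) : ℝ) * ‖V‖ ^ (k + 2) := by ring
    unfold subObj
    rw [hsplit V, hsplit W]
    linarith [neg_le_of_abs_le (hholder W)]
end

section
/- Let δ > 0, let r ≥ 2 be an integer, let α > 0, and let W, v ∈ ℝ^d. Set p := αv − (1 + δ‖W‖^{r−2})·W, and suppose t > 0 satisfies δ‖p‖^{r−2}·t^{r−1} + t − 1 = 0, with W⁺ := −t·p. Then t·(1 + δ‖W⁺‖^{r−2}) = 1, and consequently the update admits the implicit representation W⁺ = [(1 + δ‖W‖^{r−2})/(1 + δ‖W⁺‖^{r−2})]·W − [α/(1 + δ‖W⁺‖^{r−2})]·v. -/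
/-- implicit representation of one Bregman proximal gradient step with the
kernel `φ(W) = (1/2)‖W‖² + (δ/r)‖W‖^r` (no ℓ1 regularization). If
`p = αv − (1 + δ‖W‖^{r−2})W`, `t > 0` solves `δ‖p‖^{r−2}t^{r−1} + t − 1 = 0` and
`W⁺ = −t·p`, then `t(1 + δ‖W⁺‖^{r−2}) = 1` and
`W⁺ = [(1 + δ‖W‖^{r−2})/(1 + δ‖W⁺‖^{r−2})]W − [α/(1 + δ‖W⁺‖^{r−2})]v`. -/
theorem bpg_implicit_update {d : ℕ}
    (δ α : ℝ) (hδ : 0 < δ) (hα : 0 < α)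
    (r : ℕ) (hr : 2 ≤ r)
    (W v p Wplus : EuclideanSpace ℝ (Fin d))
    (t : ℝ) (ht : 0 < t)
    (hp : p = α • v - (1 + δ * ‖W‖ ^ (r - 2)) • W)
    (heq : δ * ‖p‖ ^ (r - 2) * t ^ (r - 1) + t - 1 = 0)
    (hWplus : Wplus = -t • p) :
    t * (1 + δ * ‖Wplus‖ ^ (r - 2)) = 1 ∧
      Wplus = ((1 + δ * ‖W‖ ^ (r - 2)) / (1 + δ * ‖Wplus‖ ^ (r - 2))) • W
        - (α / (1 + δ * ‖Wplus‖ ^ (r - 2))) • v := by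
  have hnorm : ‖Wplus‖ = t * ‖p‖ := by
    rw [hWplus, norm_smul, norm_neg, Real.norm_of_nonneg ht.le]
  have hscale : t * (1 + δ * ‖Wplus‖ ^ (r - 2)) = 1 := by
    rw [show r - 1 = r - 2 + 1 by omega, pow_succ] at heq
    rw [hnorm, mul_pow]
    linear_combination heq
  refine ⟨hscale, ?_⟩
  rw [div_eq_mul_inv, div_eq_mul_inv, ← eq_inv_of_mul_eq_one_left hscale, hWplus, hp]
  module
end

section
/- Let δ > 0 and let r ≥ 4 be a real number, and define φ : ℝ^d → ℝ by φ(w) := (1/2)‖w‖² + (δ/r)‖w‖^r. Then φ is twice continuously differentiable on ℝ^d, and for all w, h ∈ ℝ^d the second derivative satisfies D²φ(w)[h, h] ≥ (1 + δ‖w‖^{r−2})·‖h‖². In particular, ∇φ(w) = (1 + δ‖w‖^{r−2})w and, for w ≠ 0, D²φ(w)[h, h] = (1 + δ‖w‖^{r−2})‖h‖² + δ(r − 2)‖w‖^{r−4}⟨w, h⟩². -/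
open scoped RealInnerProductSpace

/-- The polynomial kernel `φ(w) = (1/2)‖w‖² + (δ/r)‖w‖^r` (real exponent `r`). -/
noncomputable def polyKernel {d : ℕ} (δ r : ℝ) (w : EuclideanSpace ℝ (Fin d)) : ℝ :=
  (1 / 2) * ‖w‖ ^ 2 + (δ / r) * ‖w‖ ^ r

section polyKernel

variable {d : ℕ} {δ r : ℝ}

theorem hasFDerivAt_polyKernel (hr : 1 < r) (w : EuclideanSpace ℝ (Fin d)) :
    HasFDerivAt (polyKernel (d := d) δ r)
      ((1 + δ * ‖w‖ ^ (r - 2)) • innerSL ℝ w) w := by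
  have hsq := (hasStrictFDerivAt_norm_sq w).hasFDerivAt.const_mul (1 / 2 : ℝ)
  have hpow := (hasFDerivAt_norm_rpow w hr).const_mul (δ / r)
  refine (hsq.add hpow).congr_fderiv ?_
  have hr0 : r ≠ 0 := by linarith
  ext h
  simp only [add_apply, smul_apply, smul_eq_mul,
    nsmul_eq_mul, innerSL_apply_apply]
  field_simp
  push_cast
  ring

theorem fderiv_polyKernel (hr : 1 < r) :
    fderiv ℝ (polyKernel (d := d) δ r) =
      fun w => (1 + δ * ‖w‖ ^ (r - 2)) • innerSL ℝ w :=
  funext fun w => (hasFDerivAt_polyKernel hr w).fderiv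

theorem contDiff_two_polyKernel (hr : 3 < r) : ContDiff ℝ 2 (polyKernel (d := d) δ r) := by
  have hr1 : 1 < r := by linarith
  refine (contDiff_succ_iff_fderiv (n := 1)).2
    ⟨fun w => (hasFDerivAt_polyKernel hr1 w).differentiableAt, by simp, ?_⟩
  rw [fderiv_polyKernel hr1]
  exact (contDiff_const.add (contDiff_const.mul (contDiff_norm_rpow (by linarith)))).smul
    (innerSL ℝ).contDiff

theorem gradient_polyKernel (hr : 1 < r) (w : EuclideanSpace ℝ (Fin d)) :
    gradient (polyKernel (d := d) δ r) w = (1 + δ * ‖w‖ ^ (r - 2)) • w := by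
  refine HasGradientAt.gradient (hasGradientAt_iff_hasFDerivAt.2 ?_)
  refine (hasFDerivAt_polyKernel hr w).congr_fderiv ?_
  ext h
  simp

theorem iteratedFDeriv_two_polyKernel (hr : 3 < r) (w h : EuclideanSpace ℝ (Fin d)) :
    iteratedFDeriv ℝ 2 (polyKernel (d := d) δ r) w ![h, h] =
      (1 + δ * ‖w‖ ^ (r - 2)) * ‖h‖ ^ 2
        + δ * (r - 2) * ‖w‖ ^ (r - 4) * ⟪w, h⟫ ^ 2 := by
  have hcoeff := ((hasFDerivAt_norm_rpow w (p := r - 2) (by linarith)).const_mul δ).const_add 1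
  have hfderiv := hcoeff.fun_smul ((innerSL ℝ).hasFDerivAt (x := w))
  rw [iteratedFDeriv_two_apply, fderiv_polyKernel (by linarith), hfderiv.fderiv,
    show r - 2 - 2 = r - 4 by ring]
  change (1 + δ * ‖w‖ ^ (r - 2)) * ⟪h, h⟫
    + δ * ((r - 2) * ‖w‖ ^ (r - 4) * ⟪w, h⟫) * ⟪w, h⟫ = _
  rw [real_inner_self_eq_norm_sq]
  ring

end polyKernel

/-- for `δ > 0` and `r ≥ 4`, the kernel `φ(w) = (1/2)‖w‖² + (δ/r)‖w‖^r` is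
`C²`, its second derivative satisfies `D²φ(w)[h,h] ≥ (1 + δ‖w‖^{r−2})‖h‖²`, its gradient
is `∇φ(w) = (1 + δ‖w‖^{r−2})w`, and for `w ≠ 0`,
`D²φ(w)[h,h] = (1 + δ‖w‖^{r−2})‖h‖² + δ(r−2)‖w‖^{r−4}⟨w,h⟩²`. -/
theorem polyKernel_hessian_lower_bound {d : ℕ}
    (δ : ℝ) (hδ : 0 < δ) (r : ℝ) (hr : 4 ≤ r) :
    ContDiff ℝ 2 (polyKernel (d := d) δ r) ∧
      (∀ w h : EuclideanSpace ℝ (Fin d),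
        (1 + δ * ‖w‖ ^ (r - 2)) * ‖h‖ ^ 2 ≤
          iteratedFDeriv ℝ 2 (polyKernel (d := d) δ r) w ![h, h]) ∧
      (∀ w : EuclideanSpace ℝ (Fin d),
        gradient (polyKernel (d := d) δ r) w = (1 + δ * ‖w‖ ^ (r - 2)) • w) ∧
      (∀ w h : EuclideanSpace ℝ (Fin d), w ≠ 0 →
        iteratedFDeriv ℝ 2 (polyKernel (d := d) δ r) w ![h, h] =
          (1 + δ * ‖w‖ ^ (r - 2)) * ‖h‖ ^ 2
            + δ * (r - 2) * ‖w‖ ^ (r - 4) * ⟪w, h⟫ ^ 2) := by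
  have hr3 : 3 < r := by linarith
  refine ⟨contDiff_two_polyKernel hr3, fun w h => ?_, gradient_polyKernel (by linarith),
    fun w h _ => iteratedFDeriv_two_polyKernel hr3 w h⟩
  rw [iteratedFDeriv_two_polyKernel hr3]
  have hr2 : 0 ≤ r - 2 := by linarith
  exact le_add_of_nonneg_right (by positivity)
end

section
/- Define φ : ℝ → ℝ by φ(t) := t²/2 + t⁸/8 and F : ℝ → ℝ by F(t) := t⁴/4. Then for all x, y ∈ ℝ, (F′(x) − F′(y))² ≤ 8·D_φ(x, y); explicitly, (x³ − y³)² ≤ 8·(φ(x) − φ(y) − φ′(y)(x − y)). Equivalently, since D_φ(x, y) = (1/8)(x − y)²(x⁶ + 2x⁵y + 3x⁴y² + 4x³y³ + 5x²y⁴ + 6xy⁵ + 7y⁶ + 4), the inequality amounts to (x² + xy + y²)² ≤ x⁶ + 2x⁵y + 3x⁴y² + 4x³y³ + 5x²y⁴ + 6xy⁵ + 7y⁶ + 4 for all x, y ∈ ℝ. -/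
/-- Three times the sextic form dominates the cube of `x² + xy + y²`. -/
lemma cube_quadratic_le_three_mul_sextic (x y : ℝ) :
    (x ^ 2 + x * y + y ^ 2) ^ 3 ≤
      3 * (x ^ 6 + 2 * x ^ 5 * y + 3 * x ^ 4 * y ^ 2 + 4 * x ^ 3 * y ^ 3
        + 5 * x ^ 2 * y ^ 4 + 6 * x * y ^ 5 + 7 * y ^ 6) := by
  nlinarith [sq_nonneg (x ^ 3 + 3 / 4 * x ^ 2 * y + y ^ 3),
    sq_nonneg (x ^ 2 * y + 4 / 15 * (x * y ^ 2)), sq_nonneg (x * y ^ 2 + 3 / 2 * y ^ 3),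
    sq_nonneg (x * y ^ 2), sq_nonneg (y ^ 3)]

lemma sq_quadratic_le_sextic_add_four (x y : ℝ) :
    (x ^ 2 + x * y + y ^ 2) ^ 2 ≤
      x ^ 6 + 2 * x ^ 5 * y + 3 * x ^ 4 * y ^ 2 + 4 * x ^ 3 * y ^ 3
        + 5 * x ^ 2 * y ^ 4 + 6 * x * y ^ 5 + 7 * y ^ 6 + 4 := by
  have hcube := cube_quadratic_le_three_mul_sextic x y
  have hq : 0 ≤ x ^ 2 + x * y + y ^ 2 := by
    nlinarith [sq_nonneg (x + y), sq_nonneg x, sq_nonneg y]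
  generalize x ^ 2 + x * y + y ^ 2 = q at *
  -- `q ^ 3 - 3 * q ^ 2 + 4 = (q - 2) ^ 2 * (q + 1)`
  nlinarith [mul_nonneg (sq_nonneg (q - 2)) (add_nonneg hq zero_le_one)]

lemma bregman_eq_sq_mul_sextic (x y : ℝ) :
    (x ^ 2 / 2 + x ^ 8 / 8) - (y ^ 2 / 2 + y ^ 8 / 8) - (y + y ^ 7) * (x - y) =
      (1 / 8) * (x - y) ^ 2 * (x ^ 6 + 2 * x ^ 5 * y + 3 * x ^ 4 * y ^ 2
        + 4 * x ^ 3 * y ^ 3 + 5 * x ^ 2 * y ^ 4 + 6 * x * y ^ 5 + 7 * y ^ 6 + 4) := by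
  ring

lemma sq_cube_sub_cube_le_bregman (x y : ℝ) :
    (x ^ 3 - y ^ 3) ^ 2 ≤
      8 * ((x ^ 2 / 2 + x ^ 8 / 8) - (y ^ 2 / 2 + y ^ 8 / 8) - (y + y ^ 7) * (x - y)) := by
  rw [bregman_eq_sq_mul_sextic]
  linear_combination
    mul_le_mul_of_nonneg_left (sq_quadratic_le_sextic_add_four x y) (sq_nonneg (x - y))

lemma deriv_quartic (t : ℝ) : deriv (fun t : ℝ => t ^ 4 / 4) t = t ^ 3 := by
  refine HasDerivAt.deriv (((hasDerivAt_pow 4 t).div_const 4).congr_deriv ?_)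
  norm_num

lemma deriv_kernel (t : ℝ) : deriv (fun t : ℝ => t ^ 2 / 2 + t ^ 8 / 8) t = t + t ^ 7 := by
  refine HasDerivAt.deriv
    ((((hasDerivAt_pow 2 t).div_const 2).add ((hasDerivAt_pow 8 t).div_const 8)).congr_deriv ?_)
  norm_num

/-- for `φ(t) = t²/2 + t⁸/8` and `F(t) = t⁴/4`, the gradient-difference
bound `(F′(x) − F′(y))² ≤ 8·D_φ(x, y)` holds globally; explicitly
`(x³ − y³)² ≤ 8(φ(x) − φ(y) − φ′(y)(x − y))`, which amounts to the polynomial inequality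
`(x² + xy + y²)² ≤ x⁶ + 2x⁵y + 3x⁴y² + 4x³y³ + 5x²y⁴ + 6xy⁵ + 7y⁶ + 4`. -/
theorem quartic_gradient_bound_by_bregman :
    (∀ x y : ℝ,
      (deriv (fun t : ℝ => t ^ 4 / 4) x - deriv (fun t : ℝ => t ^ 4 / 4) y) ^ 2 ≤
        8 * ((x ^ 2 / 2 + x ^ 8 / 8) - (y ^ 2 / 2 + y ^ 8 / 8)
          - deriv (fun t : ℝ => t ^ 2 / 2 + t ^ 8 / 8) y * (x - y))) ∧
    (∀ x y : ℝ,
      (x ^ 3 - y ^ 3) ^ 2 ≤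
        8 * ((x ^ 2 / 2 + x ^ 8 / 8) - (y ^ 2 / 2 + y ^ 8 / 8) - (y + y ^ 7) * (x - y))) ∧
    (∀ x y : ℝ,
      (x ^ 2 / 2 + x ^ 8 / 8) - (y ^ 2 / 2 + y ^ 8 / 8) - (y + y ^ 7) * (x - y) =
        (1 / 8) * (x - y) ^ 2 * (x ^ 6 + 2 * x ^ 5 * y + 3 * x ^ 4 * y ^ 2
          + 4 * x ^ 3 * y ^ 3 + 5 * x ^ 2 * y ^ 4 + 6 * x * y ^ 5 + 7 * y ^ 6 + 4)) ∧
    (∀ x y : ℝ,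
      (x ^ 2 + x * y + y ^ 2) ^ 2 ≤
        x ^ 6 + 2 * x ^ 5 * y + 3 * x ^ 4 * y ^ 2 + 4 * x ^ 3 * y ^ 3
          + 5 * x ^ 2 * y ^ 4 + 6 * x * y ^ 5 + 7 * y ^ 6 + 4) := by
  refine ⟨fun x y => ?_, sq_cube_sub_cube_le_bregman, bregman_eq_sq_mul_sextic,
    sq_quadratic_le_sextic_add_four⟩
  rw [deriv_quartic, deriv_quartic, deriv_kernel]
  exact sq_cube_sub_cube_le_bregman x y
end

section
/- For ε > 0 define the smoothed ReLU function σ_ε : ℝ → ℝ by σ_ε(x) = 0 for x ≤ 0, σ_ε(x) = x³(1/ε² − x/(2ε³)) for 0 < x ≤ ε, and σ_ε(x) = x − ε/2 for x > ε. Then σ_ε is twice continuously differentiable on ℝ, and for every ε ∈ (0, 1/2) and every x ∈ ℝ, 0 ≤ σ_ε(x)·σ_ε″(x) ≤ 3/4; that is, 3/4 is a uniform bound on the product σ_ε·σ_ε″ for all ε ∈ (0, 1/2). -/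
/-- The smoothed ReLU activation function `σ_ε`. -/
noncomputable def smoothReLU (ε : ℝ) (x : ℝ) : ℝ :=
  if x ≤ 0 then 0
  else if x ≤ ε then x ^ 3 * (1 / ε ^ 2 - x / (2 * ε ^ 3))
  else x - ε / 2

/-- Gluing two differentiable functions whose values and derivatives agree at the junction. -/
theorem hasDerivAt_ite_le {f g f' g' : ℝ → ℝ} {a : ℝ} (hf : ∀ x, HasDerivAt f (f' x) x)
    (hg : ∀ x, HasDerivAt g (g' x) x) (h : f a = g a) (h' : f' a = g' a) (x : ℝ) :
    HasDerivAt (fun x => if x ≤ a then f x else g x) (if x ≤ a then f' x else g' x) x := by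
  rcases lt_trichotomy x a with hx | rfl | hx
  · rw [if_pos hx.le]
    refine (hf x).congr_of_eventuallyEq ?_
    filter_upwards [Iio_mem_nhds hx] with y hy
    exact if_pos (le_of_lt hy)
  · rw [if_pos le_rfl]
    have hl : HasDerivWithinAt (fun y => if y ≤ x then f y else g y) (f' x) (Set.Iic x) x :=
      (hf x).hasDerivWithinAt.congr (fun y hy => if_pos hy) (if_pos le_rfl)
    have hr : HasDerivWithinAt (fun y => if y ≤ x then f y else g y) (f' x) (Set.Ici x) x := by
      rw [h']
      refine (hg x).hasDerivWithinAt.congr (fun y hy => ?_) ((if_pos le_rfl).trans h)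
      rcases eq_or_lt_of_le (Set.mem_Ici.mp hy) with rfl | hy
      · exact (if_pos le_rfl).trans h
      · exact if_neg hy.not_ge
    have hu := hl.union hr
    rwa [Set.Iic_union_Ici, hasDerivWithinAt_univ] at hu
  · rw [if_neg hx.not_ge]
    refine (hg x).congr_of_eventuallyEq ?_
    filter_upwards [Ioi_mem_nhds hx] with y hy
    exact if_neg (not_le_of_gt hy)

/-- The first derivative of `smoothReLU ε`. -/
noncomputable def smoothReLUDeriv (ε x : ℝ) : ℝ :=
  if x ≤ 0 then 0
  else if x ≤ ε then 3 * x ^ 2 / ε ^ 2 - 2 * x ^ 3 / ε ^ 3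
  else 1

/-- The second derivative of `smoothReLU ε`. -/
noncomputable def smoothReLUDerivTwo (ε x : ℝ) : ℝ :=
  if x ≤ 0 then 0
  else if x ≤ ε then 6 * x / ε ^ 2 - 6 * x ^ 2 / ε ^ 3
  else 0

theorem hasDerivAt_smoothReLU {ε : ℝ} (hε : 0 < ε) (x : ℝ) :
    HasDerivAt (smoothReLU ε) (smoothReLUDeriv ε x) x := by
  unfold smoothReLU smoothReLUDeriv
  refine hasDerivAt_ite_le (f' := fun _ => 0)
    (g' := fun x => if x ≤ ε then 3 * x ^ 2 / ε ^ 2 - 2 * x ^ 3 / ε ^ 3 else 1)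
    (fun x => hasDerivAt_const x 0)
    (hasDerivAt_ite_le (f' := fun x => 3 * x ^ 2 / ε ^ 2 - 2 * x ^ 3 / ε ^ 3) (g' := fun _ => 1)
      (fun x => ?_) (fun x => (hasDerivAt_id' x).sub_const _) ?_ ?_) ?_ ?_ x
  · have h := (hasDerivAt_pow 3 x).mul
      (((hasDerivAt_id x).div_const (2 * ε ^ 3)).const_sub (1 / ε ^ 2))
    refine h.congr_deriv ?_
    simp only [id]
    field_simp
    push_cast
    ring
  · field_simp
  · field_simp
    ring
  · simp [hε.le]
  · simp [hε.le]

theorem hasDerivAt_smoothReLUDeriv {ε : ℝ} (hε : 0 < ε) (x : ℝ) :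
    HasDerivAt (smoothReLUDeriv ε) (smoothReLUDerivTwo ε x) x := by
  unfold smoothReLUDeriv smoothReLUDerivTwo
  refine hasDerivAt_ite_le (f' := fun _ => 0)
    (g' := fun x => if x ≤ ε then 6 * x / ε ^ 2 - 6 * x ^ 2 / ε ^ 3 else 0)
    (fun x => hasDerivAt_const x 0)
    (hasDerivAt_ite_le (f' := fun x => 6 * x / ε ^ 2 - 6 * x ^ 2 / ε ^ 3) (g' := fun _ => 0)
      (fun x => ?_) (fun x => hasDerivAt_const x 1) ?_ ?_) ?_ ?_ x
  · have h := (((hasDerivAt_pow 2 x).const_mul 3).div_const (ε ^ 2)).sub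
      (((hasDerivAt_pow 3 x).const_mul 2).div_const (ε ^ 3))
    refine h.congr_deriv ?_
    push_cast
    ring
  · field_simp
    ring
  · field_simp
    ring
  · simp [hε.le]
  · simp [hε.le]

theorem continuous_smoothReLUDerivTwo {ε : ℝ} (hε : 0 < ε) :
    Continuous (smoothReLUDerivTwo ε) := by
  refine Continuous.if_le continuous_const (Continuous.if_le (by fun_prop) continuous_const
    continuous_id continuous_const ?_) continuous_id continuous_const ?_
  · rintro x rfl
    field_simp
    ring
  · rintro x rfl
    simp [hε.le]

theorem deriv_smoothReLU {ε : ℝ} (hε : 0 < ε) : deriv (smoothReLU ε) = smoothReLUDeriv ε :=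
  funext fun x => (hasDerivAt_smoothReLU hε x).deriv

theorem deriv_smoothReLUDeriv {ε : ℝ} (hε : 0 < ε) :
    deriv (smoothReLUDeriv ε) = smoothReLUDerivTwo ε :=
  funext fun x => (hasDerivAt_smoothReLUDeriv hε x).deriv

theorem iteratedDeriv_two_smoothReLU {ε : ℝ} (hε : 0 < ε) :
    iteratedDeriv 2 (smoothReLU ε) = smoothReLUDerivTwo ε := by
  rw [iteratedDeriv_succ, iteratedDeriv_one, deriv_smoothReLU hε, deriv_smoothReLUDeriv hε]

theorem contDiff_two_smoothReLU {ε : ℝ} (hε : 0 < ε) : ContDiff ℝ 2 (smoothReLU ε) := by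
  rw [show (2 : WithTop ℕ∞) = 1 + 1 from one_add_one_eq_two.symm, contDiff_succ_iff_deriv,
    deriv_smoothReLU hε, contDiff_one_iff_deriv, deriv_smoothReLUDeriv hε]
  exact ⟨fun x => (hasDerivAt_smoothReLU hε x).differentiableAt, by simp,
    fun x => (hasDerivAt_smoothReLUDeriv hε x).differentiableAt, continuous_smoothReLUDerivTwo hε⟩

/-- On the transition region the product depends only on the ratio `x / ε`. -/
theorem smoothReLU_mul_smoothReLUDerivTwo {ε x : ℝ} (hx : 0 < x) (hxε : x ≤ ε) :
    smoothReLU ε x * smoothReLUDerivTwo ε x =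
      3 * (x / ε) ^ 4 * ((1 - x / ε) * (2 - x / ε)) := by
  have hε : 0 < ε := hx.trans_le hxε
  simp only [smoothReLU, smoothReLUDerivTwo, if_neg hx.not_ge, if_pos hxε]
  field_simp
  ring

theorem smoothReLU_mul_smoothReLUDerivTwo_mem_Icc {ε : ℝ} (hε : 0 < ε) (x : ℝ) :
    smoothReLU ε x * smoothReLUDerivTwo ε x ∈ Set.Icc 0 (3 / 4) := by
  rcases le_or_gt x 0 with hx | hx
  · norm_num [smoothReLU, hx]
  rcases le_or_gt x ε with hxε | hxε
  · rw [smoothReLU_mul_smoothReLUDerivTwo hx hxε]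
    have ht0 : 0 ≤ x / ε := by positivity
    have ht1 : x / ε ≤ 1 := (div_le_one hε).2 hxε
    generalize x / ε = t at ht0 ht1
    have hq : 0 ≤ (1 - t) * (2 - t) := mul_nonneg (by linarith) (by linarith)
    refine ⟨by positivity, ?_⟩
    have hleft : t * (1 - t) ≤ 1 / 4 := by nlinarith [sq_nonneg (t - 1 / 2)]
    have hright : t * (2 - t) ≤ 1 := by nlinarith [sq_nonneg (t - 1)]
    have hprod : t * (1 - t) * (t * (2 - t)) ≤ 1 / 4 * 1 :=
      mul_le_mul hleft hright (mul_nonneg ht0 (by linarith)) (by norm_num)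
    have hsq : t ^ 2 ≤ 1 := pow_le_one₀ ht0 ht1
    nlinarith [mul_le_mul_of_nonneg_right hsq (mul_nonneg (sq_nonneg t) hq)]
  · norm_num [smoothReLUDerivTwo, hx.not_ge, hxε.not_ge]

/-- for every `ε > 0` the smoothed ReLU `σ_ε` is twice continuously
differentiable, and for every `ε ∈ (0, 1/2)` and every `x ∈ ℝ`,
`0 ≤ σ_ε(x)·σ_ε″(x) ≤ 3/4`. -/
theorem smoothReLU_C2_and_product_bound :
    ∀ ε : ℝ, 0 < ε →
      ContDiff ℝ 2 (smoothReLU ε) ∧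
      (ε < 1 / 2 → ∀ x : ℝ,
        0 ≤ smoothReLU ε x * iteratedDeriv 2 (smoothReLU ε) x ∧
          smoothReLU ε x * iteratedDeriv 2 (smoothReLU ε) x ≤ 3 / 4) := by
  intro ε hε
  refine ⟨contDiff_two_smoothReLU hε, fun _ x => ?_⟩
  rw [iteratedDeriv_two_smoothReLU hε]
  exact smoothReLU_mul_smoothReLUDerivTwo_mem_Icc hε x
end
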